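/- Let F be a finite field with q elements whose characteristic is neither 2 nor 3, and let a₁,a₂,a₃, b₁,b₂,b₃, c₁,c₂,c₃ ∈ Fˣ be such that the a_i are pairwise distinct, the b_i are pairwise distinct, the c_i are pairwise distinct, (a₁a₂a₃)(b₁b₂b₃)(c₁c₂c₃) = 1, and a_i b_j c_k ≠ 1 for all i, j, k ∈ {1,2,3}. Let C₁, C₂, C₃ be the conjugacy classes of diag(a₁,a₂,a₃), diag(b₁,b₂,b₃), diag(c₁,c₂,c₃) in GL₃(F) and C₄ the regular unipotent conjugacy class. Then the number of quadruples (S₁, S₂, S₃, S₄) ∈ C₁ × C₂ × C₃ × C₄ with S₁S₂S₃S₄ = 1 equals (|GL₃(F)|/(q−1)) · q⁴(q⁴ + 6q³ + 19q² + 42q + 46). -/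

import Mathlib

/-!
A quadruple is determined by `A = S₂⁻¹`, `B = S₃` and `T = S₄`, subject to `T (A⁻¹ B)` lying in the
class with eigenvalues `γ i = (a i)⁻¹`; write `α`, `β` for the eigenvalues of `A`, `B`. Such a
product has `q - 1` eigenvectors of eigenvalue `γ 0`, and `GL₃(F)` permutes the nonzero vectors
transitively, so it suffices to count the triples for which `e₀` is one of them.

For fixed `h = A⁻¹ B`, the number of `T` depends only on whether `e₀` is an eigenvector of `h`, and
of which eigenvalue, and on how many left eigenvectors of `h` annihilate `e₀`, one eigenvalue at a
time. The sums of these quantities over all pairs `(A, B)` follow from the number of matrices `S` in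
a regular semisimple class with prescribed `S e₀ = v` and `φ S = e₂`, because `h e₀ = σ e₀` says
`B e₀ = σ A e₀`, and similarly on the left. Genericity enters as `β j ≠ γ k * α i`: it removes the
terms in which `A` and `B` share an eigenvector whose eigenvalues have ratio some `γ k`.
-/

open Finset Matrix Polynomial

noncomputable section

namespace GL3Count

section ConjugacyClasses

variable {K n : Type*} [Field K] [Fintype n] [DecidableEq n]

lemma isConj_of_mul_eq_mul {S T P : Matrix n n K} (hP : IsUnit P) (h : P * S = T * P) :
    IsConj S T :=
  ⟨hP.unit, h⟩

lemma exists_eq_units_conj_of_isConj {S T : Matrix n n K} (h : IsConj S T) :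
    ∃ P : (Matrix n n K)ˣ, T = P.val * S * P⁻¹.val := by
  obtain ⟨P, hP⟩ := h
  exact ⟨P, by rw [hP.eq, mul_assoc, P.mul_inv, mul_one]⟩

lemma charpoly_eq_of_isConj {S T : Matrix n n K} (h : IsConj S T) : T.charpoly = S.charpoly := by
  obtain ⟨P, rfl⟩ := exists_eq_units_conj_of_isConj h
  rw [coe_units_inv, charpoly_units_conj]

lemma exists_hasEigenvector_of_charpoly_eq {r : n → K} {S : Matrix n n K}
    (hS : S.charpoly = ∏ i, (X - C (r i))) (i : n) :
    ∃ v, Module.End.HasEigenvector (toLin' S) (r i) v := by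
  refine Module.End.HasEigenvalue.exists_hasEigenvector ?_
  rw [Module.End.hasEigenvalue_iff_mem_spectrum, spectrum_toLin', mem_spectrum_iff_isRoot_charpoly,
    hS, IsRoot.def, eval_prod]
  exact prod_eq_zero (mem_univ i) (by simp)

theorem isConj_diagonal_iff {r : n → K} (hr : r.Injective) {S : Matrix n n K} :
    IsConj (diagonal r) S ↔ S.charpoly = ∏ i, (X - C (r i)) := by
  refine ⟨fun h ↦ (charpoly_eq_of_isConj h).trans (charpoly_diagonal r), fun hS ↦ ?_⟩
  choose v hv using exists_hasEigenvector_of_charpoly_eq hS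
  have hind : LinearIndependent K (of v)ᵀ.col :=
    Module.End.eigenvectors_linearIndependent' (toLin' S) r hr v hv
  refine isConj_of_mul_eq_mul (linearIndependent_cols_iff_isUnit.1 hind) ?_
  ext i j
  rw [mul_diagonal, transpose_apply, of_apply, mul_comm]
  exact (congrFun (hv j).apply_eq_smul i).symm

lemma isConj_inv_diagonal {r : n → K} (hr : ∀ i, r i ≠ 0) {S : Matrix n n K}
    (h : IsConj (diagonal r) S) : IsConj (diagonal r⁻¹) S⁻¹ := by
  obtain ⟨P, rfl⟩ := exists_eq_units_conj_of_isConj h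
  have hinv : (diagonal r)⁻¹ = diagonal r⁻¹ :=
    inv_eq_left_inv (by
      rw [diagonal_mul_diagonal, ← diagonal_one]
      exact congrArg _ (funext fun i ↦ inv_mul_cancel₀ (hr i)))
  refine ⟨P, ?_⟩
  rw [SemiconjBy, Matrix.mul_inv_rev, Matrix.mul_inv_rev, hinv, ← coe_units_inv, inv_inv,
    ← coe_units_inv, mul_assoc, mul_assoc, P.inv_mul, mul_one]

/-- The regular unipotent `3 × 3` Jordan block. -/
def jordan3 (K : Type*) [Field K] : Matrix (Fin 3) (Fin 3) K :=
  !![1, 1, 0; 0, 1, 1; 0, 0, 1]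

lemma linearIndependent_of_cube_eq_zero {N : Matrix n n K} (hN : N ^ 3 = 0) {u : n → K}
    (hu : N ^ 2 *ᵥ u ≠ 0) : LinearIndependent K ![N ^ 2 *ᵥ u, N *ᵥ u, u] := by
  have hN3 : N *ᵥ (N ^ 2 *ᵥ u) = 0 := by rw [mulVec_mulVec, ← pow_succ', hN, zero_mulVec]
  have hN2 : N *ᵥ (N *ᵥ u) = N ^ 2 *ᵥ u := by rw [mulVec_mulVec, ← sq]
  rw [Fintype.linearIndependent_iff]
  intro g hg
  simp only [Fin.sum_univ_three, Matrix.cons_val] at hg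
  have hNg : g 1 • N ^ 2 *ᵥ u + g 2 • N *ᵥ u = 0 := by
    simpa only [mulVec_add, mulVec_smul, hN3, hN2, mulVec_zero, smul_zero, zero_add]
      using congrArg (N *ᵥ ·) hg
  have hNNg : g 2 • N ^ 2 *ᵥ u = 0 := by
    simpa only [mulVec_add, mulVec_smul, hN3, hN2, mulVec_zero, smul_zero, zero_add]
      using congrArg (N *ᵥ ·) hNg
  have h2 : g 2 = 0 := (smul_eq_zero.1 hNNg).resolve_right hu
  have h1 : g 1 = 0 := (smul_eq_zero.1 (by simpa [h2] using hNg)).resolve_right hu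
  have h0 : g 0 = 0 := (smul_eq_zero.1 (by simpa [h1, h2] using hg)).resolve_right hu
  intro i
  fin_cases i <;> assumption

lemma charpoly_jordan3 : (jordan3 K).charpoly = (X - 1) ^ 3 := by
  rw [charpoly_of_isUpperTriangular, Fin.prod_univ_three]
  · simp [jordan3, pow_three, mul_assoc]
  · intro i j hij
    fin_cases i <;> fin_cases j <;> first | rfl | exact absurd hij (by decide)

lemma sub_one_sq_jordan3_ne_zero : (jordan3 K - 1) ^ 2 ≠ 0 := fun h ↦ by
  simpa [jordan3, sq, Matrix.mul_apply, Fin.sum_univ_three] using congrFun (congrFun h 0) 2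

lemma isConj_jordan3_of_nilpotent {N : Matrix (Fin 3) (Fin 3) K} (hN : N ^ 3 = 0)
    (hN2 : N ^ 2 ≠ 0) : IsConj (jordan3 K) (1 + N) := by
  obtain ⟨j, hj⟩ : ∃ j, N ^ 2 *ᵥ Pi.single j 1 ≠ 0 := by
    by_contra! h
    exact hN2 (ext_of_mulVec_single fun j ↦ by rw [h, zero_mulVec])
  set u : Fin 3 → K := Pi.single j 1
  set P : Matrix (Fin 3) (Fin 3) K := (of ![N ^ 2 *ᵥ u, N *ᵥ u, u])ᵀ
  have hP : IsUnit P :=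
    linearIndependent_cols_iff_isUnit.1 (linearIndependent_of_cube_eq_zero hN hj)
  have hcol (x : Fin 3 → K) : P *ᵥ x = x 0 • N ^ 2 *ᵥ u + x 1 • N *ᵥ u + x 2 • u := by
    ext i
    simp [P, mulVec, dotProduct, Fin.sum_univ_three, mul_comm]
  refine isConj_of_mul_eq_mul hP (ext_of_mulVec_single fun i ↦ ?_)
  have hN3 : N *ᵥ (N ^ 2 *ᵥ u) = 0 := by rw [mulVec_mulVec, ← pow_succ', hN, zero_mulVec]
  have hN2 : N *ᵥ (N *ᵥ u) = N ^ 2 *ᵥ u := by rw [mulVec_mulVec, ← sq]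
  simp only [← mulVec_mulVec, hcol, add_mulVec, one_mulVec, mulVec_add, mulVec_smul, hN3, hN2]
  fin_cases i <;> simp [jordan3, add_comm]

theorem isConj_jordan3_iff {T : Matrix (Fin 3) (Fin 3) K} :
    IsConj (jordan3 K) T ↔ T.charpoly = (X - 1) ^ 3 ∧ (T - 1) ^ 2 ≠ 0 := by
  constructor
  · intro h
    refine ⟨(charpoly_eq_of_isConj h).trans charpoly_jordan3, ?_⟩
    obtain ⟨P, rfl⟩ := exists_eq_units_conj_of_isConj h
    have hconj : P.val * jordan3 K * P⁻¹.val - 1 = P.val * (jordan3 K - 1) * P⁻¹.val := by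
      rw [mul_sub, sub_mul, mul_one, P.mul_inv]
    rw [hconj, Units.conj_pow, Ne, Units.mul_left_eq_zero, Units.mul_right_eq_zero]
    exact sub_one_sq_jordan3_ne_zero
  · rintro ⟨hchar, hsq⟩
    have hcube : (T - 1) ^ 3 = 0 := by
      simpa [hchar] using aeval_self_charpoly T
    simpa using isConj_jordan3_of_nilpotent hcube hsq

lemma exists_units_mulVec_eq {ι : Type*} {v w : ι → n → K} (hv : LinearIndependent K v)
    (hw : LinearIndependent K w) : ∃ x : (Matrix n n K)ˣ, ∀ i, x.val *ᵥ v i = w i := by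
  obtain ⟨g, hg⟩ := Submodule.exists_linearEquiv_restrict_eq
    (hv.linearCombinationEquiv.symm ≪≫ₗ hw.linearCombinationEquiv)
  have hunit : IsUnit (LinearMap.toMatrix' g.toLinearMap) :=
    LinearMap.isUnit_toMatrix'_iff.2 ((Module.End.isUnit_iff _).2 g.bijective)
  refine ⟨hunit.unit, fun i ↦ ?_⟩
  have hrepr : hv.linearCombinationEquiv.symm ⟨v i, Submodule.subset_span ⟨i, rfl⟩⟩ =
      Finsupp.single i 1 := hv.repr_eq_single i _ rfl
  have hgi := hg ⟨v i, Submodule.subset_span ⟨i, rfl⟩⟩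
  rw [LinearEquiv.trans_apply, hrepr] at hgi
  simpa [LinearMap.toMatrix'_mulVec] using hgi.symm

lemma exists_units_mulVec_eq_of_ne_zero {v w : n → K} (hv : v ≠ 0) (hw : w ≠ 0) :
    ∃ x : (Matrix n n K)ˣ, x.val *ᵥ v = w := by
  obtain ⟨x, hx⟩ := exists_units_mulVec_eq
    (LinearIndependent.of_subsingleton (v := fun _ : Unit ↦ v) () hv)
    (LinearIndependent.of_subsingleton (v := fun _ : Unit ↦ w) () hw)
  exact ⟨x, hx ()⟩

/-- Conjugation by an invertible matrix, as a permutation of the matrix space. -/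
def conjPerm (x : (Matrix n n K)ˣ) : Equiv.Perm (Matrix n n K) :=
  (Units.mulLeft x).trans (Units.mulRight x⁻¹)

lemma conjPerm_apply (x : (Matrix n n K)ˣ) (S : Matrix n n K) :
    conjPerm x S = x.val * S * x⁻¹.val := rfl

variable {x : (Matrix n n K)ˣ} {S T : Matrix n n K}

lemma conjPerm_mul : conjPerm x (S * T) = conjPerm x S * conjPerm x T := by
  simp only [conjPerm_apply, mul_assoc, Units.inv_mul_cancel_left]

lemma conjPerm_inv : conjPerm x S⁻¹ = (conjPerm x S)⁻¹ := by
  simp only [conjPerm_apply, Matrix.mul_inv_rev, ← coe_units_inv, inv_inv, mul_assoc]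

lemma conjPerm_mulVec_eq_iff {v w : n → K} :
    conjPerm x S *ᵥ (x.val *ᵥ v) = x.val *ᵥ w ↔ S *ᵥ v = w := by
  rw [← (mulVec_injective_of_isUnit x.isUnit).eq_iff (a := S *ᵥ v), conjPerm_apply, mulVec_mulVec,
    mulVec_mulVec, Units.inv_mul_cancel_right]

lemma vecMul_conjPerm_eq_iff {φ ψ : n → K} :
    φ ᵥ* conjPerm x S = ψ ↔ φ ᵥ* x.val ᵥ* S = ψ ᵥ* x.val := by
  rw [← (vecMul_injective_of_isUnit x.isUnit).eq_iff, conjPerm_apply, vecMul_vecMul, vecMul_vecMul,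
    Units.inv_mul_cancel_right]

lemma vecMul_inv_eq_iff (hS : IsUnit S) {φ ψ : n → K} : ψ ᵥ* S⁻¹ = φ ↔ φ ᵥ* S = ψ := by
  obtain ⟨x, rfl⟩ := hS
  rw [← coe_units_inv, ← (vecMul_injective_of_isUnit x.isUnit).eq_iff, vecMul_vecMul, x.inv_mul,
    vecMul_one, eq_comm]

lemma inv_mul_mulVec_eq_iff (hS : IsUnit S) {v w : n → K} :
    (S⁻¹ * T) *ᵥ v = w ↔ T *ᵥ v = S *ᵥ w := by
  obtain ⟨x, rfl⟩ := hS
  rw [← coe_units_inv, ← (mulVec_injective_of_isUnit x.isUnit).eq_iff, mulVec_mulVec,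
    Units.mul_inv_cancel_left]

end ConjugacyClasses

section Cubic

variable {R : Type*} [CommRing R]

lemma mulVec_eq_iff {S : Matrix (Fin 3) (Fin 3) R} {v w : Fin 3 → R} :
    S *ᵥ v = w ↔ S 0 0 * v 0 + S 0 1 * v 1 + S 0 2 * v 2 = w 0 ∧
      S 1 0 * v 0 + S 1 1 * v 1 + S 1 2 * v 2 = w 1 ∧
      S 2 0 * v 0 + S 2 1 * v 1 + S 2 2 * v 2 = w 2 := by
  simp [funext_iff, Fin.forall_fin_succ, mulVec, dotProduct, Fin.sum_univ_three]

lemma vecMul_eq_iff {S : Matrix (Fin 3) (Fin 3) R} {φ ψ : Fin 3 → R} :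
    φ ᵥ* S = ψ ↔ φ 0 * S 0 0 + φ 1 * S 1 0 + φ 2 * S 2 0 = ψ 0 ∧
      φ 0 * S 0 1 + φ 1 * S 1 1 + φ 2 * S 2 1 = ψ 1 ∧
      φ 0 * S 0 2 + φ 1 * S 1 2 + φ 2 * S 2 2 = ψ 2 := by
  simp [funext_iff, Fin.forall_fin_succ, vecMul, dotProduct, Fin.sum_univ_three]

/-- The sum of the principal `2 × 2` minors of a `3 × 3` matrix, the second elementary symmetric
function of its eigenvalues. -/
def minorSum (S : Matrix (Fin 3) (Fin 3) R) : R :=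
  S 0 0 * S 1 1 - S 0 1 * S 1 0 + S 0 0 * S 2 2 - S 0 2 * S 2 0 + S 1 1 * S 2 2 - S 1 2 * S 2 1

lemma charpoly_fin_three (S : Matrix (Fin 3) (Fin 3) R) :
    S.charpoly = X ^ 3 - C S.trace * X ^ 2 + C (minorSum S) * X - C S.det := by
  simp only [charpoly, det_fin_three, charmatrix_apply, minorSum, trace_fin_three, map_add, map_sub,
    map_mul, diagonal_apply, Fin.reduceEq, reduceIte]
  ring

lemma cubic_eq_cubic_iff {a b c a' b' c' : R} :
    (X ^ 3 - C a * X ^ 2 + C b * X - C c : R[X]) = X ^ 3 - C a' * X ^ 2 + C b' * X - C c' ↔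
      a = a' ∧ b = b' ∧ c = c' := by
  refine ⟨fun h ↦ ⟨?_, ?_, ?_⟩, by rintro ⟨rfl, rfl, rfl⟩; rfl⟩
  · simpa [coeff_X, coeff_C] using congrArg (coeff · 2) h
  · simpa [coeff_X, coeff_C] using congrArg (coeff · 1) h
  · simpa [coeff_X, coeff_C] using congrArg (coeff · 0) h

lemma charpoly_eq_prod_iff {S : Matrix (Fin 3) (Fin 3) R} {r : Fin 3 → R} :
    S.charpoly = ∏ i, (X - C (r i)) ↔ S.trace = r 0 + r 1 + r 2 ∧
      minorSum S = r 0 * r 1 + r 0 * r 2 + r 1 * r 2 ∧ S.det = r 0 * r 1 * r 2 := by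
  have hprod : ∏ i, (X - C (r i)) = X ^ 3 - C (r 0 + r 1 + r 2) * X ^ 2 +
      C (r 0 * r 1 + r 0 * r 2 + r 1 * r 2) * X - C (r 0 * r 1 * r 2) := by
    simp only [Fin.prod_univ_three, map_add, map_mul]
    ring
  rw [charpoly_fin_three, hprod, cubic_eq_cubic_iff]

end Cubic

section FiniteField

open scoped Classical

variable {F : Type*} [Field F]

local notation "q" => (Fintype.card F : ℤ)
local notation "M₃" => Matrix (Fin 3) (Fin 3) F
local notation "e₀" => (![1, 0, 0] : Fin 3 → F)
local notation "e₁" => (![0, 1, 0] : Fin 3 → F)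
local notation "e₂" => (![0, 0, 1] : Fin 3 → F)

section FixedVectors

variable {γ : Fin 3 → Fˣ} {h T : Matrix (Fin 3) (Fin 3) F} {φ : Fin 3 → F}
  {x : (Matrix (Fin 3) (Fin 3) F)ˣ}

lemma e₀_ne_zero : e₀ ≠ 0 := fun h ↦ one_ne_zero (congrFun h 0)

/-- The indicator of `h e₀ = σ e₀`. -/
def colInd (σ : Fˣ) (h : M₃) : ℤ := if h *ᵥ e₀ = (σ : F) • e₀ then 1 else 0

/-- The indicator of `e₂ h = τ e₂`. -/
def rowInd (τ : Fˣ) (h : M₃) : ℤ := if e₂ ᵥ* h = (τ : F) • e₂ then 1 else 0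

lemma colInd_conjPerm (hx : x.val *ᵥ e₀ = e₀) (σ : Fˣ) :
    colInd σ (conjPerm x h) = colInd σ h := by
  simp only [colInd, ← conjPerm_mulVec_eq_iff (x := x) (S := h), mulVec_smul, hx]

lemma rowInd_conjPerm (hx : e₂ ᵥ* x.val = φ) (τ : Fˣ) :
    rowInd τ (conjPerm x h) = if φ ᵥ* h = (τ : F) • φ then 1 else 0 := by
  simp only [rowInd, vecMul_conjPerm_eq_iff, smul_vecMul, hx]

lemma colInd_eq_ite {ρ : Fˣ} (hcol : h *ᵥ e₀ = (ρ : F) • e₀) (σ : Fˣ) :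
    colInd σ h = if σ = ρ then 1 else 0 := by
  refine if_congr ?_ rfl rfl
  rw [hcol, (smul_left_injective F e₀_ne_zero).eq_iff, Units.val_inj, eq_comm]

lemma first_col_of_mulVec_eq (hcol : h *ᵥ e₀ = e₁) : h 0 0 = 0 ∧ h 1 0 = 1 ∧ h 2 0 = 0 := by
  simpa [mulVec_eq_iff] using hcol

lemma first_col_of_mulVec_eq_smul {σ : Fˣ} (hcol : h *ᵥ e₀ = (σ : F) • e₀) :
    h 0 0 = σ ∧ h 1 0 = 0 ∧ h 2 0 = 0 := by
  simpa [mulVec_eq_iff] using hcol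

lemma exists_conjPerm_mulVec_eq (hh : IsUnit h) (hcol : ∀ σ : Fˣ, h *ᵥ e₀ ≠ (σ : F) • e₀) :
    ∃ x : M₃ˣ, x.val *ᵥ e₀ = e₀ ∧ conjPerm x h *ᵥ e₀ = e₁ := by
  have hind : LinearIndependent F ![e₀, h *ᵥ e₀] := by
    refine (LinearIndependent.pair_iff' e₀_ne_zero).2 fun a ha ↦ ?_
    rcases eq_or_ne a 0 with rfl | ha₀
    · rw [zero_smul] at ha
      exact e₀_ne_zero (mulVec_injective_of_isUnit hh (by rw [← ha, mulVec_zero]))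
    · exact hcol (Units.mk0 a ha₀) ha.symm
  have hind' : LinearIndependent F ![e₀, e₁] :=
    (LinearIndependent.pair_iff' e₀_ne_zero).2 fun a ha ↦ by simpa using congrFun ha 1
  obtain ⟨x, hx⟩ := exists_units_mulVec_eq hind hind'
  have hx₀ : x.val *ᵥ e₀ = e₀ := hx 0
  refine ⟨x, hx₀, ?_⟩
  have hx₁ := conjPerm_mulVec_eq_iff (x := x) (S := h) (v := e₀).2 rfl
  rwa [hx₀, show x.val *ᵥ (h *ᵥ e₀) = e₁ from hx 1] at hx₁

lemma sub_one_sq_ne_zero_iff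
    (hT : T 0 0 = 1 ∧ T 1 0 = 0 ∧ T 2 0 = 0 ∧ T 1 1 = 1 ∧ T 2 1 = 0 ∧ T 2 2 = 1) :
    (T - 1) ^ 2 ≠ 0 ↔ T 0 1 ≠ 0 ∧ T 1 2 ≠ 0 := by
  have hsq : (T - 1) ^ 2 = (T 0 1 * T 1 2) • !![0, 0, 1; 0, 0, 0; 0, 0, 0] := by
    ext i j
    fin_cases i <;> fin_cases j <;>
      simp [one_fin_three, sq, Matrix.mul_apply, Fin.sum_univ_three, hT]
  have hne : (!![0, 0, 1; 0, 0, 0; 0, 0, 0] : M₃) ≠ 0 :=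
    fun h ↦ one_ne_zero (congrFun (congrFun h 0) 2)
  rw [hsq, smul_ne_zero_iff, mul_ne_zero_iff, and_iff_left hne]

/-- The value that the trace condition prescribes for `((T - 1) h).trace`. -/
def traceGap (γ : Fin 3 → Fˣ) (h : M₃) : F := γ 0 + γ 1 + γ 2 - h.trace

lemma traceGap_conjPerm (x : M₃ˣ) :
    traceGap γ (conjPerm x h) = traceGap γ h := by
  rw [traceGap, traceGap, conjPerm_apply, trace_units_conj]

/-- The candidates for the elements `T` of `unipFactors γ h` with `T 2 0 = 0` when `h e₀ = e₁`. -/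
def flagFactor (γ : Fin 3 → Fˣ) (x : F × F) : M₃ :=
  !![2, (γ 0 : F), x.2; -1 / γ 0, 0, (x.1 - x.2) / γ 0; 0, 0, 1]

lemma flagFactor_sub_one_sq_ne_zero_iff (x : F × F) :
    (flagFactor γ x - 1) ^ 2 ≠ 0 ↔ x.1 ≠ 0 := by
  have hγ := (γ 0).ne_zero
  have hsq : (flagFactor γ x - 1) ^ 2 =
      x.1 • !![0, 0, 1; 0, 0, -1 / (γ 0 : F); 0, 0, 0] := by
    ext i j
    fin_cases i <;> fin_cases j <;>
      simp [flagFactor, sq, one_fin_three, Matrix.mul_apply, Fin.sum_univ_three] <;> grind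
  have hne : !![0, 0, 1; 0, 0, -1 / (γ 0 : F); 0, 0, 0] ≠ 0 := fun h ↦
    one_ne_zero (congrFun (congrFun h 0) 2)
  rw [hsq, smul_ne_zero_iff, and_iff_left hne]

lemma diagonal_mulVec_eq_smul_iff (hγ : γ.Injective) {w : Fin 3 → F} :
    w ≠ 0 ∧ diagonal (fun i ↦ (γ i : F)) *ᵥ w = (γ 0 : F) • w ↔ ∃ s : Fˣ, (s : F) • e₀ = w := by
  have h₁ : (γ 1 : F) ≠ γ 0 := Units.val_injective.ne (hγ.ne (by decide))
  have h₂ : (γ 2 : F) ≠ γ 0 := Units.val_injective.ne (hγ.ne (by decide))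
  constructor
  · rintro ⟨hw, h⟩
    have hw₁ : w 1 = 0 := by simpa [mulVec_diagonal, h₁] using congrFun h 1
    have hw₂ : w 2 = 0 := by simpa [mulVec_diagonal, h₂] using congrFun h 2
    have hw₀ : w 0 ≠ 0 := fun h₀ ↦ hw (by ext i; fin_cases i <;> simp [h₀, hw₁, hw₂])
    exact ⟨Units.mk0 _ hw₀, by ext i; fin_cases i <;> simp [hw₁, hw₂]⟩
  · rintro ⟨s, rfl⟩
    refine ⟨smul_ne_zero s.ne_zero e₀_ne_zero, ?_⟩
    ext i; fin_cases i <;> simp [mulVec_diagonal]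

end FixedVectors

section Classes

variable [Fintype F]

/-- The regular semisimple class with eigenvalues `r 0, r 1, r 2`, cut out by its characteristic
polynomial. -/
def ssClass (r : Fin 3 → Fˣ) : Finset (Matrix (Fin 3) (Fin 3) F) :=
  {S | S.charpoly = ∏ i, (X - C (r i : F))}

/-- The regular unipotent class of `GL₃`, cut out by its characteristic and minimal polynomials. -/
def unipClass (F : Type*) [Field F] [Fintype F] : Finset (Matrix (Fin 3) (Fin 3) F) :=
  {T | T.charpoly = (X - 1) ^ 3 ∧ (T - 1) ^ 2 ≠ 0}

variable {r : Fin 3 → Fˣ} {S T : Matrix (Fin 3) (Fin 3) F}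

lemma mem_ssClass : S ∈ ssClass r ↔ S.trace = r 0 + r 1 + r 2 ∧
    minorSum S = r 0 * r 1 + r 0 * r 2 + r 1 * r 2 ∧ S.det = r 0 * r 1 * r 2 := by
  rw [ssClass, mem_filter_univ, charpoly_eq_prod_iff (r := fun i ↦ (r i : F))]

lemma mem_unipClass : T ∈ unipClass F ↔
    T.trace = 3 ∧ minorSum T = 3 ∧ T.det = 1 ∧ (T - 1) ^ 2 ≠ 0 := by
  have h : (X - 1 : F[X]) ^ 3 = ∏ _i : Fin 3, (X - C 1) := by simp
  rw [unipClass, mem_filter_univ, h, charpoly_eq_prod_iff (r := fun _ ↦ (1 : F))]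
  norm_num [and_assoc]

lemma isConj_diagonal_iff_mem_ssClass (hr : r.Injective) :
    IsConj (diagonal fun i ↦ (r i : F)) S ↔ S ∈ ssClass r := by
  rw [isConj_diagonal_iff (r := fun i ↦ (r i : F)) (Units.val_injective.comp hr), ssClass,
    mem_filter_univ]

lemma isConj_jordan3_iff_mem_unipClass : IsConj (jordan3 F) T ↔ T ∈ unipClass F := by
  rw [isConj_jordan3_iff, unipClass, mem_filter_univ]

lemma conjPerm_mem_ssClass (x : M₃ˣ) : conjPerm x S ∈ ssClass r ↔ S ∈ ssClass r := by
  rw [ssClass, mem_filter_univ, mem_filter_univ, conjPerm_apply, coe_units_inv,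
    charpoly_units_conj]

lemma conjPerm_mem_unipClass (x : M₃ˣ) : conjPerm x T ∈ unipClass F ↔ T ∈ unipClass F := by
  have h : IsConj T (conjPerm x T) := ⟨x, by simp [SemiconjBy, conjPerm_apply, mul_assoc]⟩
  simp only [← isConj_jordan3_iff_mem_unipClass]
  exact ⟨fun hT ↦ hT.trans h.symm, fun hT ↦ hT.trans h⟩

lemma isUnit_of_mem_ssClass (hS : S ∈ ssClass r) : IsUnit S := by
  rw [isUnit_iff_isUnit_det, (mem_ssClass.1 hS).2.2]
  exact (r 0 * r 1 * r 2).isUnit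

lemma inv_inv_of_mem_ssClass (hS : S ∈ ssClass r) : S⁻¹⁻¹ = S :=
  nonsing_inv_nonsing_inv _ ((isUnit_iff_isUnit_det _).1 (isUnit_of_mem_ssClass hS))

lemma inv_mem_ssClass (hr : r.Injective) (hS : S ∈ ssClass r) : S⁻¹ ∈ ssClass r⁻¹ := by
  rw [← isConj_diagonal_iff_mem_ssClass hr] at hS
  rw [← isConj_diagonal_iff_mem_ssClass (r := r⁻¹) (inv_injective.comp hr)]
  convert isConj_inv_diagonal (fun i ↦ (r i).ne_zero) hS using 2
  ext i
  simp

lemma transpose_mem_ssClass : Sᵀ ∈ ssClass r ↔ S ∈ ssClass r := by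
  rw [ssClass, mem_filter_univ, mem_filter_univ, charpoly_transpose]

lemma mul_mem_ssClass_comm : S * T ∈ ssClass r ↔ T * S ∈ ssClass r := by
  rw [ssClass, mem_filter_univ, mem_filter_univ, charpoly_mul_comm]

end Classes

section Counting

/-- The multiplicity of `t` among the eigenvalues `r`. -/
def mult (r : Fin 3 → Fˣ) (t : Fˣ) : ℤ := #{i | r i = t}

lemma mult_eq_ite {r : Fin 3 → Fˣ} (hr : r.Injective) (t : Fˣ) :
    mult r t = if (t - r 0 : F) * (t - r 1) * (t - r 2) = 0 then 1 else 0 := by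
  have h01 := hr.ne (show (0 : Fin 3) ≠ 1 by decide)
  have h02 := hr.ne (show (0 : Fin 3) ≠ 2 by decide)
  have h12 := hr.ne (show (1 : Fin 3) ≠ 2 by decide)
  simp only [mult, natCast_card_filter, Fin.sum_univ_three, mul_eq_zero, sub_eq_zero, Units.val_inj]
  split_ifs <;> grind

lemma sum_ite_eq_add_card_sub_one {ι : Type*} [Fintype ι] (i₀ : ι) (f : ι → ℤ) :
    ∑ i, (if i = i₀ then f i else 1) = f i₀ + (Fintype.card ι - 1) := by
  rw [Fintype.sum_eq_add_sum_compl i₀, if_pos rfl,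
    sum_congr rfl fun i hi ↦ if_neg (by simpa using hi), sum_const, card_compl, card_singleton,
    nsmul_one, Nat.cast_pred (Fintype.card_pos_iff.2 ⟨i₀⟩)]

lemma sum_fin_three_fun {ι A : Type*} [Fintype ι] [AddCommMonoid A] (f : (Fin 3 → ι) → A) :
    ∑ v, f v = ∑ x, ∑ y, ∑ z, f ![x, y, z] := by
  simp only [← (Fin.consEquiv fun _ ↦ ι).sum_comp, Fintype.sum_prod_type, Fintype.sum_unique]
  rfl

variable [Fintype F]

lemma card_units_int : (Fintype.card Fˣ : ℤ) = q - 1 := by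
  rw [Fintype.card_units, Nat.cast_pred Fintype.card_pos]

lemma card_sub_one_ne_zero : q - 1 ≠ 0 := by
  have hcard := Fintype.one_lt_card (α := F)
  omega

lemma sum_eq_zero_add_sum_units {A : Type*} [AddCommMonoid A] (f : F → A) :
    ∑ x, f x = f 0 + ∑ u : Fˣ, f u := by
  rw [Fintype.sum_eq_add_sum_compl 0, ← sum_coe_sort]
  congr 1
  refine (Fintype.sum_equiv (unitsEquivNeZero.trans (Equiv.subtypeEquivRight fun a ↦ by simp)) _ _
    fun u ↦ rfl).symm

lemma card_filter_prod {α β : Type*} [Fintype α] [Fintype β] (p : α → β → Prop)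
    [∀ a b, Decidable (p a b)] :
    (#{x : α × β | p x.1 x.2} : ℤ) = ∑ a, (#{b | p a b} : ℤ) := by
  simp only [natCast_card_filter, Fintype.sum_prod_type]

lemma card_mul_eq (k : F) :
    (#{x : F × F | x.1 * x.2 = k} : ℤ) = q - 1 + if k = 0 then q else 0 := by
  have hunit (u : Fˣ) : #{b : F | u * b = k} = 1 :=
    card_eq_one.2 ⟨u⁻¹ * k, by ext b; simp [eq_inv_mul_iff_mul_eq₀]⟩
  rw [card_filter_prod fun a b : F ↦ a * b = k, sum_eq_zero_add_sum_units]
  simp only [hunit, zero_mul, eq_comm (a := (0 : F)), filter_const]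
  split_ifs <;> simp [card_units_int, add_comm]

lemma card_mul_right_eq (k l : F) :
    (#{p : F | p * k = l} : ℤ) = if k = 0 then if l = 0 then q else 0 else 1 := by
  split_ifs with hk hl
  · simp [hk, hl]
  · simp [hk, Ne.symm hl]
  · rw [Nat.cast_eq_one, card_eq_one]
    exact ⟨l / k, by ext p; simp [eq_div_iff hk]⟩

lemma card_ne_zero_mul_eq (k l : F) : (#{B : F | B ≠ 0 ∧ B * k = l} : ℤ) =
    if l = 0 then (q - 1) * (if k = 0 then 1 else 0) else 1 - (if k = 0 then 1 else 0) := by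
  by_cases hk : k = 0
  · by_cases hl : l = 0
    · simp [hk, hl, filter_ne', card_erase_of_mem, Nat.cast_pred Fintype.card_pos]
    · simp [hk, hl, Ne.symm hl]
  · by_cases hl : l = 0
    · simp [hk, hl]
    · simp only [hk, hl, if_false, sub_zero, Nat.cast_eq_one, card_eq_one]
      refine ⟨l / k, ?_⟩
      ext B
      simp only [mem_filter_univ, mem_singleton]
      grind

lemma card_units_smul {V : Type*} [AddCommGroup V] [Module F V] [Fintype V] {ψ : V} (hψ : ψ ≠ 0) :
    (#{v : V | ∃ s : Fˣ, (s : F) • ψ = v} : ℤ) = q - 1 := by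
  have himage : ({v : V | ∃ s : Fˣ, (s : F) • ψ = v} : Finset V) =
      univ.image fun s : Fˣ ↦ (s : F) • ψ := by ext v; simp
  rw [← card_units_int, ← card_univ, Nat.cast_inj, himage]
  exact card_image_of_injective _ fun s t hst ↦ Units.ext (smul_left_injective F hψ hst)

lemma sum_mult (r : Fin 3 → Fˣ) : ∑ t, mult r t = 3 := by
  simp only [mult, natCast_card_filter]
  rw [sum_comm]
  simp

/-- The matrices `S` of the class `r` with first column `v` and with `φ S = e₂`. As `v` and `φ`
vary, these partition the class. -/
def corner (r : Fin 3 → Fˣ) (v φ : Fin 3 → F) : Finset M₃ :=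
  {S ∈ ssClass r | S *ᵥ e₀ = v ∧ φ ᵥ* S = e₂}

lemma mem_corner {r : Fin 3 → Fˣ} {v φ : Fin 3 → F} {S : M₃} :
    S ∈ corner r v φ ↔ (S 0 0 = v 0 ∧ S 1 0 = v 1 ∧ S 2 0 = v 2) ∧
      (φ 0 * S 0 0 + φ 1 * S 1 0 + φ 2 * S 2 0 = 0 ∧
        φ 0 * S 0 1 + φ 1 * S 1 1 + φ 2 * S 2 1 = 0 ∧
        φ 0 * S 0 2 + φ 1 * S 1 2 + φ 2 * S 2 2 = 1) ∧
      S 0 0 + S 1 1 + S 2 2 = r 0 + r 1 + r 2 ∧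
      minorSum S = r 0 * r 1 + r 0 * r 2 + r 1 * r 2 ∧ S.det = r 0 * r 1 * r 2 := by
  simp only [corner, mem_filter, mem_ssClass, mulVec_eq_iff, vecMul_eq_iff, trace_fin_three,
    Matrix.cons_val, mul_one, mul_zero, add_zero]
  tauto

lemma card_corner_e₂_e₀ {r : Fin 3 → Fˣ} (hr : r.Injective) (s x : Fˣ) (y : F) :
    (#(corner r ![0, 0, (s : F)] ![(x : F), y, 0]) : ℤ) =
      q - 1 + q * mult r (-(∏ i, r i) * x / s) := by
  set c : F := -(r 0 * r 1 * r 2) * x / s with hc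
  set k : F := c * (r 0 + r 1 + r 2 - c) - (r 0 * r 1 + r 0 * r 2 + r 1 * r 2) - s / x with hk
  have hs := s.ne_zero
  have hx := x.ne_zero
  have hcard : #(corner r ![0, 0, (s : F)] ![(x : F), y, 0]) = #{p : F × F | p.1 * p.2 = k} := by
    refine card_nbij' (fun S ↦ (S 1 2, S 2 1 - s * y / x))
      (fun p ↦ !![0, -y * c / x, (1 - y * p.1) / x; 0, c, p.1;
        s, p.2 + s * y / x, r 0 + r 1 + r 2 - c]) ?_ ?_ ?_ ?_
    all_goals simp only [Set.MapsTo, Set.LeftInvOn, Set.RightInvOn, mem_coe, mem_corner, minorSum,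
      det_fin_three, mem_filter_univ, Matrix.cons_val, of_apply]
    rotate_right
    · simp
    all_goals intro S hS
    · grind
    · grind
    · have h11 : S 1 1 = c := by grind
      ext i j
      fin_cases i <;> fin_cases j <;> simp <;> grind
  have hroot : k = 0 ↔ (c - r 0) * (c - r 1) * (c - r 2) = 0 := by
    have hc0 : c ≠ 0 := by simp [hc]
    have hmul : c * k = -((c - r 0) * (c - r 1) * (c - r 2)) := by
      rw [hk, hc]; field_simp; ring
    rw [← mul_eq_zero_iff_left hc0, hmul, neg_eq_zero]
  rw [hcard, card_mul_eq, mult_eq_ite hr]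
  simp only [Fin.prod_univ_three, hroot, hc, Units.val_div_eq_div_val, Units.val_mul,
    Units.val_neg, mul_ite, mul_one, mul_zero]

lemma card_corner_e₂_e₁ (r : Fin 3 → Fˣ) (s y : Fˣ) :
    (#(corner r ![0, 0, (s : F)] ![0, (y : F), 0]) : ℤ) = q := by
  have hs := s.ne_zero
  have hy := y.ne_zero
  rw [← card_univ, Nat.cast_inj]
  refine card_nbij' (fun S ↦ S 0 2)
    (fun b ↦ !![0, r 0 * r 1 * r 2 * y / s, b; 0, 0, 1 / y;
      s, -y * (r 0 * r 1 + r 0 * r 2 + r 1 * r 2 + s * b), r 0 + r 1 + r 2]) ?_ ?_ ?_ ?_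
  all_goals simp only [Set.MapsTo, Set.LeftInvOn, Set.RightInvOn, mem_coe, mem_corner, minorSum,
    det_fin_three, mem_univ, Matrix.cons_val, of_apply, implies_true]
  · grind
  · intro S hS
    ext i j
    fin_cases i <;> fin_cases j <;> simp <;> grind

lemma card_corner_e₁_e₀ (r : Fin 3 → Fˣ) (s x : Fˣ) (z : F) :
    (#(corner r ![0, (s : F), 0] ![(x : F), 0, z]) : ℤ) = q := by
  have hs := s.ne_zero
  have hx := x.ne_zero
  set e : F := r 0 * r 1 * r 2 * x / s with he
  have he0 : e ≠ 0 := by simp [he]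
  clear_value e
  rw [← card_univ, Nat.cast_inj]
  refine card_nbij' (fun S ↦ S 2 2)
    (fun f ↦ !![0, -z * e / x, (1 - z * f) / x; s, r 0 + r 1 + r 2 - f,
      ((r 0 + r 1 + r 2 - f) * f + z * e / x * s - (r 0 * r 1 + r 0 * r 2 + r 1 * r 2)) / e;
      0, e, f]) ?_ ?_ ?_ ?_
  all_goals simp only [Set.MapsTo, Set.LeftInvOn, Set.RightInvOn, mem_coe, mem_corner, minorSum,
    det_fin_three, mem_univ, Matrix.cons_val, of_apply, implies_true]
  · grind
  · intro S hS
    have h21 : S 2 1 = e := by grind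
    ext i j
    fin_cases i <;> fin_cases j <;> simp <;> grind

lemma card_corner_e₁_e₂ {r : Fin 3 → Fˣ} (hr : r.Injective) (s z : Fˣ) :
    (#(corner r ![0, (s : F), 0] ![0, 0, (z : F)]) : ℤ) = q ^ 2 * mult r z⁻¹ := by
  have hs := s.ne_zero
  have hz := z.ne_zero
  have hcard : #(corner r ![0, (s : F), 0] ![0, 0, (z : F)]) =
      #{p : F × F | ((z⁻¹ : Fˣ) - r 0 : F) * ((z⁻¹ : Fˣ) - r 1) * ((z⁻¹ : Fˣ) - r 2) = 0} := by
    refine card_nbij' (fun S ↦ (S 0 2, S 1 2))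
      (fun p ↦ !![0, -(r 0 * r 1 * r 2) * z / s, p.1; s, r 0 + r 1 + r 2 - 1 / z, p.2;
        0, 0, 1 / z]) ?_ ?_ ?_ ?_
    all_goals simp only [Set.MapsTo, Set.LeftInvOn, Set.RightInvOn, mem_coe, mem_corner, minorSum,
      det_fin_three, mem_filter_univ, Matrix.cons_val, of_apply, implies_true,
      Units.val_inv_eq_inv_val]
    · grind
    · grind
    · intro S hS
      ext i j
      fin_cases i <;> fin_cases j <;> simp <;> grind
  rw [hcard, mult_eq_ite hr, filter_const]
  split_ifs <;> simp [sq]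

lemma card_corner_e₀_e₁ {r : Fin 3 → Fˣ} (hr : r.Injective) (s y : Fˣ) (z : F) :
    (#(corner r ![(s : F), 0, 0] ![0, (y : F), z]) : ℤ) = q ^ 2 * mult r s := by
  have hs := s.ne_zero
  have hy := y.ne_zero
  set e : F := -(r 0 * r 1 * r 2) * y / s
  set f : F := r 0 + r 1 + r 2 - s + z * e / y
  have hcard : #(corner r ![(s : F), 0, 0] ![0, (y : F), z]) =
      #{p : F × F | (s - r 0 : F) * (s - r 1) * (s - r 2) = 0} := by
    refine card_nbij' (fun S ↦ (S 0 1, S 0 2))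
      (fun p ↦ !![s, p.1, p.2; 0, -z * e / y, (1 - z * f) / y; 0, e, f]) ?_ ?_ ?_ ?_
    all_goals simp only [Set.MapsTo, Set.LeftInvOn, Set.RightInvOn, mem_coe, mem_corner, minorSum,
      det_fin_three, mem_filter_univ, Matrix.cons_val, of_apply, implies_true]
    · grind
    · grind
    · intro S hS
      have h21 : S 2 1 = e := by grind
      have h22 : S 2 2 = f := by grind
      ext i j
      fin_cases i <;> fin_cases j <;> simp <;> grind
  rw [hcard, mult_eq_ite hr, filter_const]
  split_ifs <;> simp [sq]

/-- The number of ways `s` and `t` occur as eigenvalues `r i`, `r j` with `i ≠ j`. -/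
def mult₂ (r : Fin 3 → Fˣ) (s t : Fˣ) : ℤ :=
  #{p : Fin 3 × Fin 3 | p.1 ≠ p.2 ∧ r p.1 = s ∧ r p.2 = t}

lemma diag_mem_ssClass_iff {r : Fin 3 → Fˣ} {s t : Fˣ} :
    !![(s : F), 0, 0; 0, r 0 + r 1 + r 2 - s - t, 0; 0, 0, (t : F)] ∈ ssClass r ↔
      ∃ i j, i ≠ j ∧ r i = s ∧ r j = t := by
  simp only [mem_ssClass, minorSum, det_fin_three, trace_fin_three, Matrix.cons_val, of_apply,
    ← Units.val_inj]
  constructor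
  · rintro ⟨-, h₂, h₃⟩
    have hs : (s - r 0 : F) * (s - r 1) * (s - r 2) = 0 := by linear_combination h₃ - s * h₂
    have ht : (t - r 0 : F) * (t - r 1) * (t - r 2) = 0 := by linear_combination h₃ - t * h₂
    simp only [Fin.exists_fin_succ, IsEmpty.exists_iff]
    grind
  · rintro ⟨i, j, hij, hi, hj⟩
    rw [← hi, ← hj]
    fin_cases i <;> fin_cases j <;> grind

lemma mult₂_eq_ite {r : Fin 3 → Fˣ} (hr : r.Injective) (s t : Fˣ) : mult₂ r s t =
    if !![(s : F), 0, 0; 0, r 0 + r 1 + r 2 - s - t, 0; 0, 0, (t : F)] ∈ ssClass r then 1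
      else 0 := by
  simp only [diag_mem_ssClass_iff]
  split_ifs with h
  · obtain ⟨i, j, hij, rfl, rfl⟩ := h
    rw [mult₂, card_eq_one.2 ⟨(i, j), by ext p; simp [Prod.ext_iff, hr.eq_iff]; grind⟩,
      Nat.cast_one]
  · rw [mult₂, card_eq_zero.2 (filter_eq_empty_iff.2 (by simpa using h)), Nat.cast_zero]

lemma card_corner_e₀_e₂ {r : Fin 3 → Fˣ} (hr : r.Injective) (s z : Fˣ) :
    (#(corner r ![(s : F), 0, 0] ![0, 0, (z : F)]) : ℤ) = q ^ 3 * mult₂ r s z⁻¹ := by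
  have hz := z.ne_zero
  have hcard : #(corner r ![(s : F), 0, 0] ![0, 0, (z : F)]) =
      #{p : F × F × F |
        !![(s : F), 0, 0; 0, r 0 + r 1 + r 2 - s - (z⁻¹ : Fˣ), 0; 0, 0, ((z⁻¹ : Fˣ) : F)] ∈
          ssClass r} := by
    refine card_nbij' (fun S ↦ (S 0 1, S 0 2, S 1 2))
      (fun p ↦ !![s, p.1, p.2.1; 0, r 0 + r 1 + r 2 - s - 1 / z, p.2.2; 0, 0, 1 / z]) ?_ ?_ ?_ ?_
    all_goals simp only [Set.MapsTo, Set.LeftInvOn, Set.RightInvOn, mem_coe, mem_corner, minorSum,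
      det_fin_three, mem_filter_univ, Matrix.cons_val, of_apply, implies_true, mem_ssClass,
      trace_fin_three, Units.val_inv_eq_inv_val]
    · grind
    · grind
    · intro S hS
      ext i j
      fin_cases i <;> fin_cases j <;> simp <;> grind
  rw [hcard, mult₂_eq_ite hr, filter_const]
  split_ifs <;> simp [pow_three]

end Counting

section Convolution

variable [Fintype F]

lemma sum_vecMul_units (x : M₃ˣ) (f : (Fin 3 → F) → ℤ) :
    ∑ φ, f (φ ᵥ* x.val) = ∑ φ, f φ :=
  Equiv.sum_comp ⟨(· ᵥ* x.val), (· ᵥ* x⁻¹.val), fun φ ↦ by simp, fun φ ↦ by simp⟩ f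

lemma sum_eq_of_mulVec_invariant {H : (Fin 3 → F) → ℤ}
    (hH : ∀ x : M₃ˣ, x.val *ᵥ e₀ = e₀ → e₂ ᵥ* x.val = e₂ →
      ∀ v, H (x.val *ᵥ v) = H v) :
    ∑ v, H v = H ![0, 0, 0] + ∑ s : Fˣ, (H ![(s : F), 0, 0] + q * H ![0, (s : F), 0] +
      q ^ 2 * H ![0, 0, (s : F)]) := by
  have hconj (a b c : F) {v w : Fin 3 → F} (h : !![1, a, b; 0, 1, c; 0, 0, 1] *ᵥ v = w) :
      H w = H v := by
    rw [← h]
    exact hH (nonsingInvUnit !![1, a, b; 0, 1, c; 0, 0, 1] (by simp [det_fin_three]))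
      (mulVec_eq_iff.2 (by simp [nonsingInvUnit])) (vecMul_eq_iff.2 (by simp [nonsingInvUnit])) v
  have h₁ (x : F) (s : Fˣ) : H ![x, s, 0] = H ![0, s, 0] :=
    hconj (x / s) 0 0 (mulVec_eq_iff.2 (by simp))
  have h₂ (x y : F) (s : Fˣ) : H ![x, y, s] = H ![0, 0, s] :=
    hconj 0 (x / s) (y / s) (mulVec_eq_iff.2 (by simp))
  have hz (x y : F) : ∑ z, H ![x, y, z] = H ![x, y, 0] + ∑ s : Fˣ, H ![0, 0, (s : F)] := by
    simp only [sum_eq_zero_add_sum_units (A := ℤ), h₂]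
  have hy (x : F) : ∑ y, H ![x, y, 0] = H ![x, 0, 0] + ∑ s : Fˣ, H ![0, (s : F), 0] := by
    simp only [sum_eq_zero_add_sum_units (A := ℤ), h₁]
  have hx : ∑ x, H ![x, 0, 0] = H ![0, 0, 0] + ∑ s : Fˣ, H ![(s : F), 0, 0] := by
    rw [sum_eq_zero_add_sum_units]
  simp only [sum_fin_three_fun H, hz, hy, hx, sum_add_distrib, sum_const, card_univ, nsmul_eq_mul,
    ← mul_sum]
  ring

lemma card_corner_mulVec {x : M₃ˣ} (hx₀ : x.val *ᵥ e₀ = e₀) (hx₂ : e₂ ᵥ* x.val = e₂)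
    (r : Fin 3 → Fˣ) (v φ : Fin 3 → F) :
    #(corner r (x.val *ᵥ v) φ) = #(corner r v (φ ᵥ* x.val)) := by
  refine (card_equiv (conjPerm x) fun S ↦ ?_).symm
  have hcol : conjPerm x S *ᵥ e₀ = x.val *ᵥ v ↔ S *ᵥ e₀ = v := by
    rw [← conjPerm_mulVec_eq_iff (x := x) (S := S), hx₀]
  rw [corner, corner, mem_filter, mem_filter, conjPerm_mem_ssClass, vecMul_conjPerm_eq_iff, hx₂,
    hcol]

lemma corner_zero_col (r : Fin 3 → Fˣ) (φ : Fin 3 → F) : corner r ![0, 0, 0] φ = ∅ := by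
  ext S
  have hdet := (r 0 * r 1 * r 2).ne_zero
  simp only [Units.val_mul, mem_corner, det_fin_three, Matrix.cons_val, notMem_empty,
    iff_false] at hdet ⊢
  grind

lemma corner_eq_empty {r : Fin 3 → Fˣ} {v φ : Fin 3 → F} (h : φ ⬝ᵥ v ≠ 0) : corner r v φ = ∅ := by
  ext S
  simp only [corner, mem_filter, notMem_empty, iff_false]
  rintro ⟨-, rfl, hφ⟩
  exact h (by rw [dotProduct_mulVec, hφ]; simp)

lemma corner_zero_row (r : Fin 3 → Fˣ) (v : Fin 3 → F) : corner r v ![0, 0, 0] = ∅ := by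
  ext S
  simp only [mem_corner, Matrix.cons_val, notMem_empty, iff_false]
  grind

lemma sum_row_e₀ {f : (Fin 3 → F) → ℤ} (s : Fˣ) (h0 : f ![0, 0, 0] = 0)
    (hf : ∀ φ, φ ⬝ᵥ ![(s : F), 0, 0] ≠ 0 → f φ = 0) :
    ∑ φ, f φ = ∑ y : Fˣ, ∑ z, f ![0, (y : F), z] + ∑ z : Fˣ, f ![0, 0, (z : F)] := by
  have hx (x : Fˣ) (y z : F) : f ![(x : F), y, z] = 0 :=
    hf _ (by simp [dotProduct, Fin.sum_univ_three])
  rw [sum_fin_three_fun, sum_eq_zero_add_sum_units]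
  simp only [hx, sum_const_zero, add_zero]
  rw [sum_eq_zero_add_sum_units, sum_eq_zero_add_sum_units, h0, zero_add, add_comm]

lemma sum_row_e₁ {f : (Fin 3 → F) → ℤ} (s : Fˣ) (h0 : f ![0, 0, 0] = 0)
    (hf : ∀ φ, φ ⬝ᵥ ![0, (s : F), 0] ≠ 0 → f φ = 0) :
    ∑ φ, f φ = ∑ x : Fˣ, ∑ z, f ![(x : F), 0, z] + ∑ z : Fˣ, f ![0, 0, (z : F)] := by
  have hy (x : F) (y : Fˣ) (z : F) : f ![x, (y : F), z] = 0 :=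
    hf _ (by simp [dotProduct, Fin.sum_univ_three])
  have hsum (x : F) : ∑ y, ∑ z, f ![x, y, z] = ∑ z, f ![x, 0, z] := by
    rw [sum_eq_zero_add_sum_units]
    simp only [hy, sum_const_zero, add_zero]
  simp only [sum_fin_three_fun f, hsum]
  rw [sum_eq_zero_add_sum_units, sum_eq_zero_add_sum_units, h0, zero_add, add_comm]

lemma sum_row_e₂ {f : (Fin 3 → F) → ℤ} (s : Fˣ) (h0 : f ![0, 0, 0] = 0)
    (hf : ∀ φ, φ ⬝ᵥ ![0, 0, (s : F)] ≠ 0 → f φ = 0) :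
    ∑ φ, f φ = ∑ x : Fˣ, ∑ y, f ![(x : F), y, 0] + ∑ y : Fˣ, f ![0, (y : F), 0] := by
  have hz (x y : F) (z : Fˣ) : f ![x, y, (z : F)] = 0 :=
    hf _ (by simp [dotProduct, Fin.sum_univ_three])
  have hsum (x y : F) : ∑ z, f ![x, y, z] = f ![x, y, 0] := by
    rw [sum_eq_zero_add_sum_units]
    simp only [hz, sum_const_zero, add_zero]
  simp only [sum_fin_three_fun f, hsum]
  rw [sum_eq_zero_add_sum_units, sum_eq_zero_add_sum_units, h0, zero_add, add_comm]

/-- The number of matrices in the class with first column `v`. -/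
def colCount (r : Fin 3 → Fˣ) (v : Fin 3 → F) : ℤ := #{S ∈ ssClass r | S *ᵥ e₀ = v}

lemma colCount_eq_sum (r : Fin 3 → Fˣ) (v : Fin 3 → F) :
    colCount r v = ∑ φ, (#(corner r v φ) : ℤ) := by
  rw [colCount, card_eq_sum_card_fiberwise (f := fun S ↦ e₂ ᵥ* S⁻¹) (t := univ) (by simp),
    Nat.cast_sum]
  refine sum_congr rfl fun φ _ ↦ ?_
  rw [filter_filter, corner, Nat.cast_inj]
  congr 1
  refine filter_congr fun S hS ↦ ?_
  rw [vecMul_inv_eq_iff (isUnit_of_mem_ssClass hS)]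

lemma colCount_mulVec {x : M₃ˣ} (hx₀ : x.val *ᵥ e₀ = e₀) (hx₂ : e₂ ᵥ* x.val = e₂)
    (r : Fin 3 → Fˣ) (v : Fin 3 → F) : colCount r (x.val *ᵥ v) = colCount r v := by
  simp only [colCount_eq_sum, card_corner_mulVec hx₀ hx₂]
  exact sum_vecMul_units x fun φ ↦ (#(corner r v φ) : ℤ)

lemma sum_mult₂ (r : Fin 3 → Fˣ) (s : Fˣ) : ∑ t, mult₂ r s t = 2 * mult r s := by
  have hfib : ∑ t, mult₂ r s t = #{p : Fin 3 × Fin 3 | p.1 ≠ p.2 ∧ r p.1 = s} := by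
    rw [card_eq_sum_card_fiberwise (f := fun p ↦ r p.2) (t := univ) (by simp), Nat.cast_sum]
    simp only [mult₂, filter_filter, and_assoc]
  rw [hfib]
  simp only [natCast_card_filter, Fintype.sum_prod_type, mult, mul_sum]
  refine sum_congr rfl fun i _ ↦ ?_
  by_cases h : r i = s <;> fin_cases i <;> simp_all [Fin.sum_univ_three]

lemma colCount_zero (r : Fin 3 → Fˣ) : colCount r ![0, 0, 0] = 0 := by
  simp only [colCount_eq_sum, corner_zero_col, card_empty, Nat.cast_zero, sum_const_zero]

lemma colCount_e₀ {r : Fin 3 → Fˣ} (hr : r.Injective) (s : Fˣ) :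
    colCount r ![(s : F), 0, 0] = q ^ 3 * (q + 1) * mult r s := by
  rw [colCount_eq_sum, sum_row_e₀ s (by rw [corner_zero_row, card_empty, Nat.cast_zero])
    fun φ h ↦ by rw [corner_eq_empty h, card_empty, Nat.cast_zero]]
  simp only [card_corner_e₀_e₁ hr, card_corner_e₀_e₂ hr, sum_const, card_univ, nsmul_eq_mul,
    card_units_int, ← mul_sum]
  rw [Fintype.sum_equiv (Equiv.inv Fˣ) (fun z ↦ mult₂ r s z⁻¹) (mult₂ r s) fun _ ↦ rfl, sum_mult₂]
  ring

lemma colCount_e₁ {r : Fin 3 → Fˣ} (hr : r.Injective) (s : Fˣ) :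
    colCount r ![0, (s : F), 0] = q ^ 2 * (q + 2) := by
  rw [colCount_eq_sum, sum_row_e₁ s (by rw [corner_zero_row, card_empty, Nat.cast_zero])
    fun φ h ↦ by rw [corner_eq_empty h, card_empty, Nat.cast_zero]]
  simp only [card_corner_e₁_e₀, card_corner_e₁_e₂ hr, sum_const, card_univ, nsmul_eq_mul,
    card_units_int, ← mul_sum]
  rw [Fintype.sum_equiv (Equiv.inv Fˣ) (fun z ↦ mult r z⁻¹) (mult r) fun _ ↦ rfl, sum_mult]
  ring

lemma colCount_e₂ {r : Fin 3 → Fˣ} (hr : r.Injective) (s : Fˣ) :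
    colCount r ![0, 0, (s : F)] = q ^ 2 * (q + 2) := by
  rw [colCount_eq_sum, sum_row_e₂ s (by rw [corner_zero_row, card_empty, Nat.cast_zero])
    fun φ h ↦ by rw [corner_eq_empty h, card_empty, Nat.cast_zero]]
  simp only [card_corner_e₂_e₀ hr, card_corner_e₂_e₁, sum_const, card_univ, nsmul_eq_mul,
    card_units_int, ← mul_sum, sum_add_distrib]
  have hmult : ∑ x : Fˣ, mult r (-(∏ i, r i) * x / s) = 3 := by
    rw [← sum_mult r]
    exact Fintype.sum_equiv (Equiv.mulLeft (-(∏ i, r i) / s)) _ _ fun x ↦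
      congrArg (mult r) (mul_div_right_comm _ _ _)
  rw [hmult]
  ring

lemma card_ssClass {r : Fin 3 → Fˣ} (hr : r.Injective) :
    (#(ssClass r) : ℤ) = q ^ 3 * (q + 1) * (q ^ 2 + q + 1) := by
  have hfib : (#(ssClass r) : ℤ) = ∑ v, colCount r v := by
    rw [card_eq_sum_card_fiberwise (f := (· *ᵥ e₀)) (t := univ) (by simp), Nat.cast_sum]
    rfl
  rw [hfib, sum_eq_of_mulVec_invariant fun x h₀ h₂ ↦ colCount_mulVec h₀ h₂ r]
  simp only [colCount_zero, colCount_e₀ hr, colCount_e₁ hr, colCount_e₂ hr, sum_add_distrib,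
    ← mul_sum, sum_mult, sum_const, card_univ, nsmul_eq_mul, card_units_int]
  ring

end Convolution

section Pairs

variable [Fintype F]

/-- The number of pairs `(i, j)` with `β j = σ * α i`. -/
def coinc (α β : Fin 3 → Fˣ) (σ : Fˣ) : ℤ := ∑ t, mult α t * mult β (σ * t)

/-- The number of `((i, k), (j, l))` with `i ≠ k`, `j ≠ l`, `β j = σ * α i` and `β l = τ * α k`. -/
def coinc₂ (α β : Fin 3 → Fˣ) (σ τ : Fˣ) : ℤ := ∑ s, ∑ t, mult₂ α s t * mult₂ β (σ * s) (τ * t)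

/-- The sum of `f (A⁻¹ B)` over the pairs `(A, B)` in the two classes. -/
def pairSum (α β : Fin 3 → Fˣ) (f : M₃ → ℤ) : ℤ :=
  ∑ A ∈ ssClass α, ∑ B ∈ ssClass β, f (A⁻¹ * B)

variable {α β : Fin 3 → Fˣ}

lemma sum_coinc (α β : Fin 3 → Fˣ) : ∑ σ, coinc α β σ = 9 := by
  have hσ (t : Fˣ) : ∑ σ, mult β (σ * t) = 3 := by
    rw [← sum_mult β]
    exact Equiv.sum_comp (Equiv.mulRight t) (mult β)
  simp only [coinc]
  rw [sum_comm]
  simp only [← mul_sum, hσ, ← sum_mul, sum_mult]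
  norm_num

lemma sum_coinc₂ (α β : Fin 3 → Fˣ) (σ : Fˣ) : ∑ τ, coinc₂ α β σ τ = 4 * coinc α β σ := by
  have hτ (s t : Fˣ) : ∑ τ, mult₂ β s (τ * t) = 2 * mult β s := by
    rw [← sum_mult₂]
    exact Equiv.sum_comp (Equiv.mulRight t) (mult₂ β s)
  simp only [coinc₂, coinc, mul_sum]
  rw [sum_comm]
  refine sum_congr rfl fun s _ ↦ ?_
  rw [sum_comm]
  simp only [← mul_sum, hτ, ← sum_mul, sum_mult₂]
  ring

lemma coinc_eq_zero {σ : Fˣ} (h : ∀ i j, β j ≠ σ * α i) : coinc α β σ = 0 :=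
  sum_eq_zero fun t _ ↦ by
    simp only [mult, mul_eq_zero, Nat.cast_eq_zero, card_eq_zero, filter_eq_empty_iff, mem_univ,
      true_imp_iff]
    grind

lemma coinc₂_eq_zero_left {σ : Fˣ} (h : ∀ i j, β j ≠ σ * α i) (τ : Fˣ) : coinc₂ α β σ τ = 0 :=
  sum_eq_zero fun s _ ↦ sum_eq_zero fun t _ ↦ by
    simp only [mult₂, mul_eq_zero, Nat.cast_eq_zero, card_eq_zero, filter_eq_empty_iff, mem_univ,
      true_imp_iff]
    grind

lemma pairSum_col (hα : α.Injective) (hβ : β.Injective) (σ : Fˣ) :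
    pairSum α β (colInd σ) =
      q ^ 6 * (q + 1) ^ 2 * coinc α β σ + q ^ 5 * (q ^ 2 - 1) * (q + 2) ^ 2 := by
  have hfib : pairSum α β (colInd σ) = ∑ v, colCount α v * colCount β ((σ : F) • v) := by
    simp only [colCount, ← nsmul_eq_mul, ← sum_const, sum_fiberwise' (ssClass α) (· *ᵥ e₀)
      (fun v ↦ (#{B ∈ ssClass β | B *ᵥ e₀ = (σ : F) • v} : ℤ))]
    refine sum_congr rfl fun A hA ↦ ?_
    simp only [natCast_card_filter, colInd, inv_mul_mulVec_eq_iff (isUnit_of_mem_ssClass hA),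
      mulVec_smul]
  rw [hfib, sum_eq_of_mulVec_invariant fun x h₀ h₂ v ↦ by
    rw [colCount_mulVec h₀ h₂, ← mulVec_smul, colCount_mulVec h₀ h₂]]
  simp only [smul_cons, smul_eq_mul, mul_zero, Matrix.smul_empty, ← Units.val_mul, colCount_zero,
    colCount_e₀ hα, colCount_e₀ hβ, colCount_e₁ hα, colCount_e₁ hβ, colCount_e₂ hα, colCount_e₂ hβ,
    sum_add_distrib, sum_const, card_univ, nsmul_eq_mul, card_units_int, coinc]
  rw [mul_sum]
  ring_nf

lemma sum_ssClass_inv_transpose (hα : α.Injective) (f : M₃ → ℤ) :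
    ∑ A ∈ ssClass α⁻¹, f A = ∑ A ∈ ssClass α, f A⁻¹ᵀ := by
  have hdet {r : Fin 3 → Fˣ} {A : M₃} (hA : A ∈ ssClass r) :=
    (isUnit_iff_isUnit_det A).1 (isUnit_of_mem_ssClass hA)
  refine sum_nbij' (fun A ↦ A⁻¹ᵀ) (fun A ↦ A⁻¹ᵀ) (fun A hA ↦ ?_) (fun A hA ↦ ?_) (fun A hA ↦ ?_)
    (fun A hA ↦ ?_) (fun A hA ↦ ?_)
  · have hA' := transpose_mem_ssClass.2 (inv_mem_ssClass (r := α⁻¹) (inv_injective.comp hα) hA)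
    rwa [inv_inv] at hA'
  · exact transpose_mem_ssClass.2 (inv_mem_ssClass hα hA)
  all_goals simp only [transpose_nonsing_inv, transpose_transpose,
    nonsing_inv_nonsing_inv A (hdet hA)]

lemma pairSum_inv (hα : α.Injective) (hβ : β.Injective) (f : M₃ → ℤ) :
    pairSum α⁻¹ β⁻¹ f = pairSum α β fun h ↦ f h⁻¹ᵀ := by
  simp only [pairSum, sum_ssClass_inv_transpose hα, sum_ssClass_inv_transpose hβ]
  simp only [Matrix.mul_inv_rev, transpose_mul, transpose_nonsing_inv]

lemma pairSum_conj (α β : Fin 3 → Fˣ) (x : M₃ˣ) (f : M₃ → ℤ) :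
    pairSum α β (fun h ↦ f (conjPerm x h)) = pairSum α β f := by
  have hsum (r : Fin 3 → Fˣ) (g : M₃ → ℤ) :
      ∑ A ∈ ssClass r, g (conjPerm x A) = ∑ A ∈ ssClass r, g A :=
    sum_equiv (conjPerm x) (fun A ↦ (conjPerm_mem_ssClass x).symm) fun A _ ↦ rfl
  calc pairSum α β (fun h ↦ f (conjPerm x h))
      = ∑ A ∈ ssClass α, ∑ B ∈ ssClass β, f ((conjPerm x A)⁻¹ * conjPerm x B) := by
        simp only [pairSum, conjPerm_mul, conjPerm_inv]
    _ = ∑ A ∈ ssClass α, ∑ B ∈ ssClass β, f ((conjPerm x A)⁻¹ * B) :=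
        sum_congr rfl fun A _ ↦ hsum β fun B ↦ f ((conjPerm x A)⁻¹ * B)
    _ = pairSum α β f := hsum α fun A ↦ ∑ B ∈ ssClass β, f (A⁻¹ * B)

lemma coinc_inv (α β : Fin 3 → Fˣ) (σ : Fˣ) : coinc α⁻¹ β⁻¹ σ⁻¹ = coinc α β σ := by
  have hmult (r : Fin 3 → Fˣ) (t : Fˣ) : mult r⁻¹ t⁻¹ = mult r t := by simp [mult]
  rw [coinc, coinc, ← Equiv.sum_comp (Equiv.inv Fˣ)]
  simp only [Equiv.inv_apply, ← mul_inv, hmult]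

lemma pairSum_row (hα : α.Injective) (hβ : β.Injective) (τ : Fˣ) :
    pairSum α β (rowInd τ) =
      q ^ 6 * (q + 1) ^ 2 * coinc α β τ + q ^ 5 * (q ^ 2 - 1) * (q + 2) ^ 2 := by
  rw [← coinc_inv,
    ← pairSum_col (α := α⁻¹) (β := β⁻¹) (inv_injective.comp hα) (inv_injective.comp hβ),
    pairSum_inv hα hβ]
  set w : M₃ˣ :=
    nonsingInvUnit !![0, 0, 1; 0, 1, 0; 1, 0, 0] (by simp [det_fin_three]) with hw
  have he : e₂ ᵥ* w.val = e₀ := vecMul_eq_iff.2 (by simp [hw, nonsingInvUnit])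
  rw [← pairSum_conj α β w]
  refine sum_congr rfl fun A hA ↦ sum_congr rfl fun B hB ↦ ?_
  have hunit : IsUnit (A⁻¹ * B) :=
    (isUnit_nonsing_inv_iff.2 (isUnit_of_mem_ssClass hA)).mul (isUnit_of_mem_ssClass hB)
  simp only [rowInd, colInd, vecMul_conjPerm_eq_iff, smul_vecMul, he, mulVec_transpose,
    vecMul_inv_eq_iff hunit, Units.val_inv_eq_inv_val, inv_smul_eq_iff₀ τ.ne_zero]

/-- The number of pairs `(A, B)` with `A e₀ = v`, `A⁻¹ B e₀ = σ e₀` and `e₂ A⁻¹ B = τ e₂`, sorted by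
`φ = e₂ A⁻¹`. -/
def crossCount (α β : Fin 3 → Fˣ) (σ τ : Fˣ) (v : Fin 3 → F) : ℤ :=
  ∑ φ, (#(corner α v φ) : ℤ) * #(corner β ((σ : F) • v) ((τ⁻¹ : F) • φ))

lemma pairSum_eq_sum_crossCount (α β : Fin 3 → Fˣ) (σ τ : Fˣ) :
    pairSum α β (fun h ↦ colInd σ h * rowInd τ h) = ∑ v, crossCount α β σ τ v := by
  have hcorner (v φ : Fin 3 → F) :
      corner α v φ = {A ∈ ssClass α | (A *ᵥ e₀, e₂ ᵥ* A⁻¹) = (v, φ)} :=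
    filter_congr fun A hA ↦ by rw [Prod.mk.injEq, vecMul_inv_eq_iff (isUnit_of_mem_ssClass hA)]
  simp only [crossCount, ← Fintype.sum_prod_type', hcorner, ← nsmul_eq_mul, ← sum_const]
  rw [sum_fiberwise' (ssClass α) (fun A ↦ (A *ᵥ e₀, e₂ ᵥ* A⁻¹))
    fun p ↦ (#(corner β ((σ : F) • p.1) ((τ⁻¹ : F) • p.2)) : ℤ)]
  refine sum_congr rfl fun A hA ↦ ?_
  simp only [corner, natCast_card_filter, colInd, rowInd, ite_and, ite_mul, one_mul, zero_mul,
    inv_mul_mulVec_eq_iff (isUnit_of_mem_ssClass hA), mulVec_smul, smul_vecMul, vecMul_vecMul,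
    inv_smul_eq_iff₀ τ.ne_zero]

lemma crossCount_mulVec {x : M₃ˣ} (hx₀ : x.val *ᵥ e₀ = e₀)
    (hx₂ : e₂ ᵥ* x.val = e₂) (α β : Fin 3 → Fˣ) (σ τ : Fˣ) (v : Fin 3 → F) :
    crossCount α β σ τ (x.val *ᵥ v) = crossCount α β σ τ v := by
  simp only [crossCount, ← mulVec_smul, card_corner_mulVec hx₀ hx₂, smul_vecMul]
  exact sum_vecMul_units x fun φ ↦
    (#(corner α v φ) : ℤ) * #(corner β ((σ : F) • v) ((τ⁻¹ : F) • φ))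

lemma crossCount_zero (α β : Fin 3 → Fˣ) (σ τ : Fˣ) : crossCount α β σ τ ![0, 0, 0] = 0 := by
  simp only [crossCount, corner_zero_col, card_empty, Nat.cast_zero, zero_mul, sum_const_zero]

lemma crossCount_e₀ (hα : α.Injective) (hβ : β.Injective) (σ τ s : Fˣ) :
    crossCount α β σ τ ![(s : F), 0, 0] = q ^ 5 * (q - 1) * (mult α s * mult β (σ * s)) +
      q ^ 6 * ∑ t, mult₂ α s t * mult₂ β (σ * s) (τ * t) := by
  rw [crossCount, sum_row_e₀ s (by rw [corner_zero_row, card_empty, Nat.cast_zero, zero_mul])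
    fun φ h ↦ by rw [corner_eq_empty h, card_empty, Nat.cast_zero, zero_mul]]
  simp only [smul_cons, smul_eq_mul, mul_zero, Matrix.smul_empty, ← Units.val_inv_eq_inv_val,
    ← Units.val_mul, card_corner_e₀_e₁ hα, card_corner_e₀_e₁ hβ, card_corner_e₀_e₂ hα,
    card_corner_e₀_e₂ hβ, sum_const, card_univ, nsmul_eq_mul, card_units_int, mul_inv, inv_inv]
  rw [← Equiv.sum_comp (Equiv.inv Fˣ) fun t ↦ mult₂ α s t * mult₂ β (σ * s) (τ * t)]
  simp only [Equiv.inv_apply, mul_sum]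
  ring_nf

lemma crossCount_e₁ (hα : α.Injective) (hβ : β.Injective) (σ τ s : Fˣ) :
    crossCount α β σ τ ![0, (s : F), 0] = q ^ 3 * (q - 1) + q ^ 4 * coinc α β τ := by
  rw [crossCount, sum_row_e₁ s (by rw [corner_zero_row, card_empty, Nat.cast_zero, zero_mul])
    fun φ h ↦ by rw [corner_eq_empty h, card_empty, Nat.cast_zero, zero_mul]]
  simp only [smul_cons, smul_eq_mul, mul_zero, Matrix.smul_empty, ← Units.val_inv_eq_inv_val,
    ← Units.val_mul, card_corner_e₁_e₀, card_corner_e₁_e₂ hα,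
    card_corner_e₁_e₂ hβ, sum_const, card_univ, nsmul_eq_mul, card_units_int, mul_inv, inv_inv]
  rw [coinc, ← Equiv.sum_comp (Equiv.inv Fˣ) fun t ↦ mult α t * mult β (τ * t)]
  simp only [Equiv.inv_apply, mul_sum]
  ring_nf

lemma crossCount_e₂ (hα : α.Injective) (hβ : β.Injective) (σ τ s : Fˣ) :
    crossCount α β σ τ ![0, 0, (s : F)] = q * ((q - 1) ^ 3 + 6 * q * (q - 1) +
      q ^ 2 * coinc α β ((∏ i, β i) / ((∏ i, α i) * σ * τ))) + q ^ 2 * (q - 1) := by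
  rw [crossCount, sum_row_e₂ s (by rw [corner_zero_row, card_empty, Nat.cast_zero, zero_mul])
    fun φ h ↦ by rw [corner_eq_empty h, card_empty, Nat.cast_zero, zero_mul]]
  simp only [smul_cons, smul_eq_mul, mul_zero, Matrix.smul_empty, ← Units.val_inv_eq_inv_val,
    ← Units.val_mul, card_corner_e₂_e₀ hα, card_corner_e₂_e₀ hβ, card_corner_e₂_e₁,
    sum_const, card_univ, nsmul_eq_mul, card_units_int]
  set ν := (∏ i, β i) / ((∏ i, α i) * σ * τ) with hν
  have hβarg (x : Fˣ) : -(∏ i, β i) * (τ⁻¹ * x) / (σ * s) = ν * (-(∏ i, α i) * x / s) := by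
    rw [hν]
    generalize ∏ i, β i = b
    generalize ∏ i, α i = a
    ext
    push_cast
    field_simp
  have hsub : ∑ x : Fˣ, q * ((q - 1 + q * mult α (-(∏ i, α i) * x / s)) *
        (q - 1 + q * mult β (ν * (-(∏ i, α i) * x / s)))) =
      ∑ t, q * ((q - 1 + q * mult α t) * (q - 1 + q * mult β (ν * t))) :=
    Fintype.sum_equiv (Equiv.mulLeft (-(∏ i, α i) / s)) _ _ fun x ↦ by
      simp only [Equiv.coe_mulLeft, mul_div_right_comm]
  have hνsum : ∑ t, mult β (ν * t) = 3 := by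
    rw [← sum_mult β]
    exact Equiv.sum_comp (Equiv.mulLeft ν) (mult β)
  have hexpand (a b : ℤ) : (q - 1 + q * a) * (q - 1 + q * b) =
      (q - 1) ^ 2 + q * (q - 1) * a + q * (q - 1) * b + q ^ 2 * (a * b) := by ring
  simp only [hβarg, hsub]
  simp only [hexpand, ← mul_sum, sum_add_distrib, sum_mult, hνsum, sum_const, card_univ,
    nsmul_eq_mul, card_units_int, coinc]
  ring

lemma pairSum_col_row (hα : α.Injective) (hβ : β.Injective) (σ τ : Fˣ) :
    pairSum α β (fun h ↦ colInd σ h * rowInd τ h) = q ^ 6 * coinc₂ α β σ τ +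
      q ^ 5 * (q - 1) * (coinc α β σ + coinc α β τ) + 2 * q ^ 4 * (q - 1) ^ 2 +
      q ^ 3 * (q - 1) * ((q - 1) ^ 3 + 6 * q * (q - 1) +
        q ^ 2 * coinc α β ((∏ i, β i) / ((∏ i, α i) * σ * τ))) := by
  rw [pairSum_eq_sum_crossCount, sum_eq_of_mulVec_invariant fun x h₀ h₂ ↦
    crossCount_mulVec h₀ h₂ α β σ τ]
  simp only [crossCount_zero, crossCount_e₀ hα hβ, crossCount_e₁ hα hβ, crossCount_e₂ hα hβ,
    sum_add_distrib, ← mul_sum, sum_const, card_univ, nsmul_eq_mul, card_units_int]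
  have hσ : ∑ s, mult α s * mult β (σ * s) = coinc α β σ := rfl
  rw [hσ, coinc₂]
  ring

end Pairs

section UnipotentFactors

variable [Fintype F]

/-- The regular unipotent `T` for which `T h` lies in the class `γ` with `e₀` an eigenvector of
eigenvalue `γ 0`. -/
def unipFactors (γ : Fin 3 → Fˣ) (h : M₃) : Finset M₃ :=
  {T ∈ unipClass F | T * h ∈ ssClass γ ∧ (T * h) *ᵥ e₀ = (γ 0 : F) • e₀}

/-- The number of nonzero row vectors `φ` with `φ e₀ = 0` and `φ h = τ φ`. -/
def coeigenCount (τ : Fˣ) (h : M₃) : ℤ :=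
  #{φ : Fin 3 → F | φ ≠ 0 ∧ φ 0 = 0 ∧ φ ᵥ* h = (τ : F) • φ}

variable {γ : Fin 3 → Fˣ} {h T : Matrix (Fin 3) (Fin 3) F}

lemma mem_ssClass_iff_trace {S : M₃} (hdet : S.det = γ 0 * γ 1 * γ 2)
    (hcol : S *ᵥ e₀ = (γ 0 : F) • e₀) : S ∈ ssClass γ ↔ S.trace = γ 0 + γ 1 + γ 2 := by
  have hγ := (γ 0).ne_zero
  simp only [mulVec_eq_iff, Matrix.cons_val, Pi.smul_apply, smul_eq_mul] at hcol
  simp only [mem_ssClass, det_fin_three, trace_fin_three, minorSum] at hdet ⊢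
  grind

lemma mem_unipFactors (hdet : h.det = γ 0 * γ 1 * γ 2) : T ∈ unipFactors γ h ↔
    T ∈ unipClass F ∧ T *ᵥ (h *ᵥ e₀) = (γ 0 : F) • e₀ ∧ (T * h).trace = γ 0 + γ 1 + γ 2 := by
  rw [unipFactors, mem_filter, mulVec_mulVec, and_comm (a := _ ∈ ssClass γ)]
  refine and_congr_right fun hT ↦ and_congr_right fun hcol ↦ mem_ssClass_iff_trace ?_ hcol
  rw [det_mul, (mem_unipClass.1 hT).2.2.1, one_mul, hdet]

lemma conjPerm_mem_unipFactors {x : M₃ˣ} (hx : x.val *ᵥ e₀ = e₀) :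
    conjPerm x T ∈ unipFactors γ (conjPerm x h) ↔ T ∈ unipFactors γ h := by
  have hcol : conjPerm x (T * h) *ᵥ e₀ = (γ 0 : F) • e₀ ↔ (T * h) *ᵥ e₀ = (γ 0 : F) • e₀ := by
    rw [← conjPerm_mulVec_eq_iff (x := x) (S := T * h), mulVec_smul, hx]
  rw [unipFactors, unipFactors, mem_filter, mem_filter, conjPerm_mem_unipClass, ← conjPerm_mul,
    conjPerm_mem_ssClass, hcol]

lemma card_unipFactors_conjPerm {x : M₃ˣ} (hx : x.val *ᵥ e₀ = e₀) :
    #(unipFactors γ (conjPerm x h)) = #(unipFactors γ h) :=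
  (card_equiv (conjPerm x) fun _ ↦ (conjPerm_mem_unipFactors hx).symm).symm

lemma coeigenCount_conjPerm {x : M₃ˣ} (hx : x.val *ᵥ e₀ = e₀) (τ : Fˣ) :
    coeigenCount τ (conjPerm x h) = coeigenCount τ h := by
  have hzero (φ : Fin 3 → F) : (φ ᵥ* x.val) 0 = φ 0 := by
    have hdot (ψ : Fin 3 → F) : ψ ⬝ᵥ e₀ = ψ 0 := by simp [dotProduct, Fin.sum_univ_three]
    rw [← hdot (φ ᵥ* x.val), ← dotProduct_mulVec, hx, hdot φ]
  rw [coeigenCount, natCast_card_filter, coeigenCount, natCast_card_filter,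
    ← sum_vecMul_units x fun φ ↦ if φ ≠ 0 ∧ φ 0 = 0 ∧ φ ᵥ* h = (τ : F) • φ then 1 else 0]
  refine sum_congr rfl fun φ _ ↦ if_congr ?_ rfl rfl
  rw [vecMul_conjPerm_eq_iff, smul_vecMul, hzero, ← (vecMul_injective_of_isUnit x.isUnit).ne_iff,
    zero_vecMul]

lemma card_unipFactors_of_ne_zero (hdet : h.det = γ 0 * γ 1 * γ 2) (hcol : h *ᵥ e₀ = e₁) {z : F}
    (hz : z ≠ 0) : #{T ∈ unipFactors γ h | T 2 0 = z} =
      #{x : F × F | x.2 * ((z * h 0 1 + x.1 * h 2 1) * z) =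
        (((3 - x.1) * x.1 - 3) * h 0 1 + γ 0 * (z * h 0 2 + x.1 * h 2 2 - γ 1 - γ 2)) * z -
          (x.1 - 1) ^ 3 * h 2 1} := by
  have hγ := (γ 0).ne_zero
  have hent := first_col_of_mulVec_eq hcol
  refine card_nbij' (fun T ↦ (T 2 2, T 0 2)) (fun x ↦ !![3 - x.1, γ 0, x.2;
    ((3 - x.1) * x.1 - x.2 * z - 3) / γ 0, 0, (-(x.1 - 1) ^ 3 / z - x.2 * x.1) / γ 0; z, 0, x.1])
    ?_ ?_ ?_ ?_
  all_goals simp only [Set.MapsTo, Set.LeftInvOn, Set.RightInvOn, mem_coe, mem_filter,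
    mem_unipFactors hdet, hcol, mem_unipClass, minorSum, det_fin_three, mem_univ, Matrix.cons_val,
    of_apply, implies_true, mulVec_eq_iff, trace_fin_three, Matrix.mul_apply, Fin.sum_univ_three,
    Pi.smul_apply, smul_eq_mul, true_and, and_true]
  · grind
  · intro x hx
    refine ⟨⟨by grind, by grind, by grind, fun hsq ↦ ?_⟩, by grind, by grind⟩
    have hentry : z * (3 - x.1 - 1) + (x.1 - 1) * z = 0 := by
      simpa [sq, Matrix.mul_apply, Fin.sum_univ_three] using congrFun (congrFun hsq 2) 0
    grind
  · intro T hT; ext i j; fin_cases i <;> fin_cases j <;> simp <;> grind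

lemma flagFactor_mem_unipFactors (hdet : h.det = γ 0 * γ 1 * γ 2) (hcol : h *ᵥ e₀ = e₁)
    (x : F × F) : flagFactor γ x ∈ unipFactors γ h ↔
      x.1 ≠ 0 ∧ x.2 * h 2 1 = x.1 * h 2 1 - h 0 1 + γ 0 * (h 2 2 - γ 1 - γ 2) := by
  have hγ := (γ 0).ne_zero
  have hent := first_col_of_mulVec_eq hcol
  simp only [mem_unipFactors hdet, hcol, mem_unipClass, flagFactor_sub_one_sq_ne_zero_iff]
  simp only [flagFactor, minorSum, det_fin_three, mulVec_eq_iff, Matrix.cons_val, trace_fin_three,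
    Pi.smul_apply, smul_eq_mul, of_apply, Matrix.mul_apply, Fin.sum_univ_three]
  grind

lemma flagFactor_eq_of_mem_unipFactors (hdet : h.det = γ 0 * γ 1 * γ 2) (hcol : h *ᵥ e₀ = e₁)
    (hT : T ∈ unipFactors γ h) (hz : T 2 0 = 0) :
    flagFactor γ (T 0 2 + γ 0 * T 1 2, T 0 2) = T := by
  have hγ := (γ 0).ne_zero
  simp only [mem_unipFactors hdet, hcol, mem_unipClass, minorSum, det_fin_three, mulVec_eq_iff,
    Matrix.cons_val, trace_fin_three, Pi.smul_apply, smul_eq_mul] at hT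
  ext i j; fin_cases i <;> fin_cases j <;> simp [flagFactor] <;> grind

lemma card_unipFactors_zero (hdet : h.det = γ 0 * γ 1 * γ 2) (hcol : h *ᵥ e₀ = e₁) :
    #{T ∈ unipFactors γ h | T 2 0 = 0} =
      #{x : F × F | x.1 ≠ 0 ∧ x.2 * h 2 1 =
        x.1 * h 2 1 - h 0 1 + γ 0 * (h 2 2 - γ 1 - γ 2)} := by
  simp only [← flagFactor_mem_unipFactors hdet hcol]
  refine card_nbij' (fun T ↦ (T 0 2 + γ 0 * T 1 2, T 0 2)) (flagFactor γ) ?_ ?_ ?_ ?_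
  · intro T hT
    rw [mem_coe, mem_filter] at hT
    rw [mem_coe, mem_filter_univ, flagFactor_eq_of_mem_unipFactors hdet hcol hT.1 hT.2]
    exact hT.1
  · intro x hx
    rw [mem_coe, mem_filter_univ] at hx
    exact mem_coe.2 (mem_filter.2 ⟨hx, rfl⟩)
  · intro T hT
    rw [mem_coe, mem_filter] at hT
    exact flagFactor_eq_of_mem_unipFactors hdet hcol hT.1 hT.2
  · intro x _
    have hγ := (γ 0).ne_zero
    ext <;> simp [flagFactor]
    grind

lemma card_unipFactors_fiber_unit (hγ : γ.Injective) (hdet : h.det = γ 0 * γ 1 * γ 2)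
    (hcol : h *ᵥ e₀ = e₁) (z : Fˣ) : (#{T ∈ unipFactors γ h | T 2 0 = (z : F)} : ℤ) =
      if h 2 1 = 0 then q else
        q * ((if (γ 0 * γ 1 * z : F) = h 2 1 then 1 else 0) +
          if (γ 0 * γ 2 * z : F) = h 2 1 then 1 else 0) + (q - 1) := by
  have hent := first_col_of_mulVec_eq hcol
  have h12 := Units.val_injective.ne (hγ.ne (show (1 : Fin 3) ≠ 2 by decide))
  have hz := z.ne_zero
  have hγ₀ := (γ 0).ne_zero
  rw [det_fin_three, hent.1, hent.2.1, hent.2.2] at hdet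
  rw [card_unipFactors_of_ne_zero (by rw [det_fin_three, hent.1, hent.2.1, hent.2.2, hdet]) hcol hz,
    card_filter_prod fun w p : F ↦ p * ((z * h 0 1 + w * h 2 1) * z) =
        (((3 - w) * w - 3) * h 0 1 + γ 0 * (z * h 0 2 + w * h 2 2 - γ 1 - γ 2)) * z -
          (w - 1) ^ 3 * h 2 1]
  simp only [card_mul_right_eq, mul_eq_zero, hz, or_false]
  by_cases hd : h 2 1 = 0
  · have hb : h 0 1 ≠ 0 := by grind [(γ 1).ne_zero, (γ 2).ne_zero]
    simp [hd, hz, hb]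
  · have hw (w : F) : z * h 0 1 + w * h 2 1 = 0 ↔ w = -z * h 0 1 / h 2 1 := by grind
    simp only [hw, sum_ite_eq_add_card_sub_one, if_neg hd, add_left_inj]
    set w := -z * h 0 1 / h 2 1
    have hroots : (((3 - w) * w - 3) * h 0 1 + γ 0 * (z * h 0 2 + w * h 2 2 - γ 1 - γ 2)) * z -
        (w - 1) ^ 3 * h 2 1 = (γ 0 * γ 1 * z - h 2 1) * (γ 0 * γ 2 * z - h 2 1) / h 2 1 := by
      have hwd : w * h 2 1 = -z * h 0 1 := by grind
      rw [eq_div_iff hd]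
      grind
    rw [hroots]
    simp only [div_eq_zero_iff, hd, or_false, mul_eq_zero, sub_eq_zero]
    split_ifs <;> grind

lemma card_unipFactors_of_mulVec_eq (hγ : γ.Injective) (hdet : h.det = γ 0 * γ 1 * γ 2)
    (hcol : h *ᵥ e₀ = e₁) : (#(unipFactors γ h) : ℤ) =
      if h 2 1 = 0 then q * (q - 1) * (1 + if h 2 2 = γ 1 ∨ h 2 2 = γ 2 then 1 else 0)
      else q * (q + 1) := by
  have hent := first_col_of_mulVec_eq hcol
  rw [card_eq_sum_card_fiberwise (f := fun T ↦ T 2 0) (t := univ) (by simp),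
    sum_eq_zero_add_sum_units, Nat.cast_add, card_unipFactors_zero hdet hcol, Nat.cast_sum,
    card_filter_prod fun m p : F ↦ m ≠ 0 ∧ p * h 2 1 =
        m * h 2 1 - h 0 1 + γ 0 * (h 2 2 - γ 1 - γ 2), sum_eq_zero_add_sum_units]
  simp only [card_unipFactors_fiber_unit hγ hdet hcol, ne_eq, Units.ne_zero, not_false_iff,
    true_and, card_mul_right_eq, not_true, false_and, filter_false, card_empty, Nat.cast_zero,
    zero_add]
  rw [det_fin_three, hent.1, hent.2.1, hent.2.2] at hdet
  by_cases hd : h 2 1 = 0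
  · have hroots : -h 0 1 + γ 0 * (h 2 2 - γ 1 - γ 2) = 0 ↔ h 2 2 = γ 1 ∨ h 2 2 = γ 2 := by
      have hf : h 2 2 ≠ 0 := by grind [(γ 0).ne_zero, (γ 1).ne_zero, (γ 2).ne_zero]
      grind [(γ 0).ne_zero]
    simp only [hd, if_pos, mul_zero, zero_sub, hroots, sum_const, card_univ, nsmul_eq_mul,
      card_units_int]
    split_ifs <;> ring
  · have hroot (i : Fin 3) : ∑ z : Fˣ, (if (γ 0 * γ i * z : F) = h 2 1 then 1 else 0 : ℤ) = 1 := by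
      have hz (z : Fˣ) : (γ 0 * γ i * z : F) = h 2 1 ↔ z = (γ 0 * γ i)⁻¹ * Units.mk0 _ hd := by
        rw [eq_inv_mul_iff_mul_eq, Units.ext_iff]
        rfl
      simp [hz]
    simp only [if_neg hd, sum_add_distrib, ← mul_sum, hroot, sum_const, card_univ, nsmul_eq_mul,
      card_units_int]
    ring

lemma coeigenCount_of_mulVec_eq (hcol : h *ᵥ e₀ = e₁) (τ : Fˣ) :
    coeigenCount τ h = if h 2 1 = 0 ∧ h 2 2 = τ then q - 1 else 0 := by
  have hent := first_col_of_mulVec_eq hcol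
  have hmem (φ : Fin 3 → F) : (φ ≠ 0 ∧ φ 0 = 0 ∧ φ ᵥ* h = (τ : F) • φ) ↔
      φ 0 = 0 ∧ φ 1 = 0 ∧ φ 2 ≠ 0 ∧ h 2 1 = 0 ∧ h 2 2 = τ := by
    have hne : φ ≠ 0 ↔ ¬(φ 0 = 0 ∧ φ 1 = 0 ∧ φ 2 = 0) := by
      simp [funext_iff, Fin.forall_fin_succ]
    simp only [hne, vecMul_eq_iff, Pi.smul_apply, smul_eq_mul, hent]
    grind
  simp only [coeigenCount, hmem]
  split_ifs with hτ
  · rw [← card_units_int, ← card_univ, Nat.cast_inj]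
    simp only [hτ, and_true]
    symm
    refine card_bij (fun s _ ↦ ![0, 0, (s : F)]) ?_ ?_ ?_
    · simp
    · intro s _ t _ hst
      simpa [Units.ext_iff] using hst
    · intro φ hφ
      rw [mem_filter_univ] at hφ
      refine ⟨Units.mk0 (φ 2) hφ.2.2, mem_univ _, ?_⟩
      ext i; fin_cases i <;> simp [hφ]
  · simp [hτ]

lemma card_unipFactors_of_not_eigenvector (hγ : γ.Injective) (hdet : h.det = γ 0 * γ 1 * γ 2)
    (hcol : ∀ σ : Fˣ, h *ᵥ e₀ ≠ (σ : F) • e₀) : (q - 1) * #(unipFactors γ h) =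
      q * (q ^ 2 - 1 - 2 * ∑ τ, coeigenCount τ h +
        (q - 1) * (coeigenCount (γ 1) h + coeigenCount (γ 2) h)) := by
  have hh : IsUnit h := by
    rw [isUnit_iff_isUnit_det, hdet]
    exact (γ 0 * γ 1 * γ 2).isUnit
  obtain ⟨x, hx, hx₁⟩ := exists_conjPerm_mulVec_eq hh hcol
  have hdet' : (conjPerm x h).det = γ 0 * γ 1 * γ 2 := by
    rw [conjPerm_apply, coe_units_inv, det_conj x.isUnit, hdet]
  rw [← card_unipFactors_conjPerm hx, card_unipFactors_of_mulVec_eq hγ hdet' hx₁]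
  simp only [← coeigenCount_conjPerm (h := h) hx]
  generalize conjPerm x h = k at *
  have h12 := hγ.ne (show (1 : Fin 3) ≠ 2 by decide)
  simp only [coeigenCount_of_mulVec_eq hx₁]
  by_cases hd : k 2 1 = 0
  · have hf : k 2 2 ≠ 0 := fun hf ↦ (γ 0 * γ 1 * γ 2).ne_zero (by
      rw [Units.val_mul, Units.val_mul, ← hdet', det_fin_three, (first_col_of_mulVec_eq hx₁).2.2,
        hf, hd]
      simp)
    lift k 2 2 to Fˣ using hf.isUnit with f
    simp only [hd, true_and, if_true, Units.val_inj, sum_ite_eq, mem_univ]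
    clear hdet' hcol hx₁
    split_ifs <;> grind
  · simp [hd]
    ring

end UnipotentFactors

section EigenvectorCase

variable [Fintype F]

/-- The nonzero row vectors annihilating `e₀`. -/
def annE₀ (F : Type*) [Field F] [Fintype F] : Finset (Fin 3 → F) := {φ | φ ≠ 0 ∧ φ 0 = 0}

variable {γ : Fin 3 → Fˣ} {h T : Matrix (Fin 3) (Fin 3) F} {φ : Fin 3 → F}

lemma mem_annE₀ : φ ∈ annE₀ F ↔ φ ≠ 0 ∧ φ 0 = 0 := by rw [annE₀, mem_filter_univ]

lemma card_annE₀ : (#(annE₀ F) : ℤ) = q ^ 2 - 1 := by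
  have hcard : #(annE₀ F) = #(univ.erase (0 : F × F)) := by
    refine card_nbij' (fun φ ↦ (φ 1, φ 2)) (fun x ↦ ![0, x.1, x.2]) ?_ ?_ ?_ ?_
    · intro φ
      simp +contextual [mem_annE₀, funext_iff, Fin.forall_fin_succ, Prod.ext_iff]
    · intro x
      simp [mem_annE₀, funext_iff, Fin.forall_fin_succ, Prod.ext_iff]
    · intro φ hφ
      ext i; fin_cases i <;> simp [(mem_annE₀.1 hφ).2]
    · simp [Set.RightInvOn, Set.LeftInvOn]
  rw [hcard, card_erase_of_mem (mem_univ _), card_univ, Fintype.card_prod,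
    Nat.cast_pred (mul_pos Fintype.card_pos Fintype.card_pos), Nat.cast_mul, sq]

lemma coeigenCount_eq_sum (τ : Fˣ) : coeigenCount τ h =
    ∑ φ ∈ annE₀ F, if φ ᵥ* h = (τ : F) • φ then 1 else 0 := by
  rw [coeigenCount, ← natCast_card_filter, annE₀, filter_filter]
  simp only [and_assoc]

lemma exists_units_vecMul_eq (hφ : φ ∈ annE₀ F) :
    ∃ x : M₃ˣ, x.val *ᵥ e₀ = e₀ ∧ e₂ ᵥ* x.val = φ := by
  rw [mem_annE₀] at hφ
  by_cases hz : φ 2 = 0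
  · have hy : φ 1 ≠ 0 := fun hy ↦ hφ.1 (by ext i; fin_cases i <;> simp [hφ.2, hy, hz])
    refine ⟨nonsingInvUnit !![1, 0, 0; 0, 0, 1; 0, φ 1, 0] (by simp [det_fin_three, hy]), ?_, ?_⟩
    · rw [mulVec_eq_iff]; simp [nonsingInvUnit]
    · rw [vecMul_eq_iff]; simp [nonsingInvUnit, hφ.2, hz]
  · refine ⟨nonsingInvUnit !![1, 0, 0; 0, 1, 0; 0, φ 1, φ 2] (by simp [det_fin_three, hz]), ?_, ?_⟩
    · rw [mulVec_eq_iff]; simp [nonsingInvUnit]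
    · rw [vecMul_eq_iff]; simp [nonsingInvUnit, hφ.2]

lemma card_annE₀_filter_eq_zero {a c : F} (hne : a ≠ 0 ∨ c ≠ 0) :
    (#{φ ∈ annE₀ F | φ 1 * a + φ 2 * c = 0} : ℤ) = q - 1 := by
  have hψ : ![0, c, -a] ≠ 0 := fun h ↦ by
    have hc : c = 0 := congrFun h 1
    have ha : -a = 0 := congrFun h 2
    grind
  rw [← card_units_smul hψ, Nat.cast_inj]
  congr 1
  ext φ
  simp only [mem_filter, mem_annE₀, mem_univ, true_and]
  constructor
  · rintro ⟨⟨hφ, h₀⟩, h⟩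
    have hφ' : φ 1 ≠ 0 ∨ φ 2 ≠ 0 := by
      by_contra! hz
      exact hφ (by ext i; fin_cases i <;> simp [h₀, hz])
    by_cases hc : c = 0
    · refine ⟨Units.mk0 (-φ 2 / a) (by grind), ?_⟩
      ext i; fin_cases i <;> simp <;> grind
    · refine ⟨Units.mk0 (φ 1 / c) (by grind), ?_⟩
      ext i; fin_cases i <;> simp <;> grind
  · rintro ⟨s, rfl⟩
    refine ⟨⟨smul_ne_zero s.ne_zero hψ, by simp⟩, ?_⟩
    simp only [Pi.smul_apply, Matrix.cons_val, smul_eq_mul]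
    ring

lemma card_annE₀_filter_singular {a b c d : F} (hdet : a * d = b * c)
    (hne : ¬(a = 0 ∧ b = 0 ∧ c = 0 ∧ d = 0)) :
    (#{φ ∈ annE₀ F | φ 1 * a + φ 2 * c = 0 ∧ φ 1 * b + φ 2 * d = 0} : ℤ) = q - 1 := by
  by_cases hac : a ≠ 0 ∨ c ≠ 0
  · rw [← card_annE₀_filter_eq_zero hac]
    exact congrArg _ (congrArg _ (filter_congr fun φ _ ↦ by grind))
  · have hbd : b ≠ 0 ∨ d ≠ 0 := by grind
    rw [← card_annE₀_filter_eq_zero hbd]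
    exact congrArg _ (congrArg _ (filter_congr fun φ _ ↦ by grind))

lemma card_unipFactors_fixing_e₂ (hdet : h.det = γ 0 * γ 1 * γ 2)
    (hcol : h *ᵥ e₀ = (γ 0 : F) • e₀) :
    #{T ∈ unipFactors γ h | e₂ ᵥ* T = e₂} =
      #((univ.erase (0 : F)) ×ˢ (univ : Finset F) ×ˢ
        ({B | B ≠ 0 ∧ B * h 2 1 = traceGap γ h} : Finset F)) := by
  have hγ := (γ 0).ne_zero
  have hent := first_col_of_mulVec_eq_smul hcol
  refine card_nbij' (fun T ↦ (T 0 1, T 0 2, T 1 2))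
    (fun x ↦ !![1, x.1, x.2.1; 0, 1, x.2.2; 0, 0, 1]) ?_ ?_ ?_ ?_
  all_goals simp only [Set.MapsTo, Set.LeftInvOn, Set.RightInvOn, mem_coe, mem_filter,
    mem_unipFactors hdet, hcol, mem_unipClass, minorSum, det_fin_three, mem_univ, Matrix.cons_val,
    of_apply, implies_true, mulVec_eq_iff, vecMul_eq_iff, trace_fin_three, Matrix.mul_apply,
    Fin.sum_univ_three, Pi.smul_apply, smul_eq_mul, true_and, and_true, mem_product, mem_erase,
    traceGap]
  · intro T hT
    obtain ⟨h₀₁, h₁₂⟩ := (sub_one_sq_ne_zero_iff ⟨by grind, by grind, by grind, by grind, by grind,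
      by grind⟩).1 hT.1.1.2.2.2
    exact ⟨h₀₁, h₁₂, by grind⟩
  · intro x hx
    refine ⟨⟨⟨by grind, by grind, by grind, ?_⟩, by grind, by grind⟩, by grind⟩
    exact (sub_one_sq_ne_zero_iff (by simp)).2 ⟨hx.1, hx.2.1⟩
  · intro T hT; ext i j; fin_cases i <;> fin_cases j <;> simp <;> grind

lemma sum_rowInd (hdet : h.det = γ 0 * γ 1 * γ 2) (hcol : h *ᵥ e₀ = (γ 0 : F) • e₀) :
    ∑ τ, rowInd τ h = if h 2 1 = 0 then 1 else 0 := by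
  have hent := first_col_of_mulVec_eq_smul hcol
  split_ifs with h₂₁
  · have h₂₂ : h 2 2 ≠ 0 := fun h₂₂ ↦ by
      rw [det_fin_three, hent.2.1, hent.2.2, h₂₁, h₂₂] at hdet
      simp at hdet
    rw [sum_eq_single (Units.mk0 _ h₂₂)]
    · exact if_pos (vecMul_eq_iff.2 (by simp [hent, h₂₁]))
    · intro τ _ hτ
      refine if_neg fun h' ↦ hτ (Units.ext ?_)
      simpa using (vecMul_eq_iff.1 h').2.2.symm
    · simp
  · refine sum_eq_zero fun τ _ ↦ if_neg fun h' ↦ h₂₁ ?_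
    simpa using (vecMul_eq_iff.1 h').2.1

lemma vecMul_eq_smul_iff (hcol : h 1 0 = 0 ∧ h 2 0 = 0) (hφ : φ ∈ annE₀ F) (t : F) :
    φ ᵥ* h = t • φ ↔
      φ 1 * (h 1 1 - t) + φ 2 * h 2 1 = 0 ∧ φ 1 * h 1 2 + φ 2 * (h 2 2 - t) = 0 := by
  have h₀ := (mem_annE₀.1 hφ).2
  simp only [vecMul_eq_iff, Pi.smul_apply, smul_eq_mul]
  grind

lemma card_coeigenvectors (hcol : h 1 0 = 0 ∧ h 2 0 = 0) {t : F}
    (hdet : (h 1 1 - t) * (h 2 2 - t) = h 1 2 * h 2 1)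
    (hne : ¬(h 1 1 - t = 0 ∧ h 1 2 = 0 ∧ h 2 1 = 0 ∧ h 2 2 - t = 0)) :
    (#{φ ∈ annE₀ F | φ ᵥ* h = t • φ} : ℤ) = q - 1 := by
  rw [filter_congr fun φ hφ ↦ vecMul_eq_smul_iff hcol hφ t, card_annE₀_filter_singular hdet hne]

lemma exists_coeigenvector_det_eq (hcol : h 1 0 = 0 ∧ h 2 0 = 0) {t : F} (hφ : φ ∈ annE₀ F)
    (ht : φ ᵥ* h = t • φ) : (h 1 1 - t) * (h 2 2 - t) = h 1 2 * h 2 1 := by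
  have hφ' := mem_annE₀.1 hφ
  rw [vecMul_eq_smul_iff hcol hφ] at ht
  by_contra hne
  refine hφ'.1 ?_
  ext i; fin_cases i <;> simp <;> grind

lemma card_unipFactors_fixing (hdet : h.det = γ 0 * γ 1 * γ 2)
    (hcol : h *ᵥ e₀ = (γ 0 : F) • e₀) (hφ : φ ∈ annE₀ F) :
    (#{T ∈ unipFactors γ h | φ ᵥ* T = φ} : ℤ) = q * (q - 1) *
      if traceGap γ h = 0 then (q - 1) * ∑ τ : Fˣ, (if φ ᵥ* h = (τ : F) • φ then 1 else 0)
      else 1 - ∑ τ : Fˣ, (if φ ᵥ* h = (τ : F) • φ then 1 else 0) := by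
  obtain ⟨x, hx₀, hx₂⟩ := exists_units_vecMul_eq hφ
  have hcol' : conjPerm x h *ᵥ e₀ = (γ 0 : F) • e₀ := by
    rw [← conjPerm_mulVec_eq_iff (x := x), hx₀, mulVec_smul, hx₀] at hcol
    exact hcol
  have hdet' : (conjPerm x h).det = γ 0 * γ 1 * γ 2 := by
    rw [conjPerm_apply, det_units_conj, hdet]
  have hcard : #{T ∈ unipFactors γ h | φ ᵥ* T = φ} =
      #{T ∈ unipFactors γ (conjPerm x h) | e₂ ᵥ* T = e₂} :=
    card_equiv (conjPerm x) fun T ↦ by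
      rw [mem_filter, mem_filter, conjPerm_mem_unipFactors hx₀, vecMul_conjPerm_eq_iff, hx₂]
  simp only [← rowInd_conjPerm hx₂, sum_rowInd hdet' hcol']
  rw [hcard, card_unipFactors_fixing_e₂ hdet' hcol', card_product, card_product,
    card_erase_of_mem (mem_univ _), card_univ, Nat.cast_mul, Nat.cast_mul, card_ne_zero_mul_eq,
    Nat.cast_pred Fintype.card_pos, traceGap_conjPerm]
  ring

lemma card_annE₀_filter_fixed (hdet : h.det = γ 0 * γ 1 * γ 2)
    (hcol : h *ᵥ e₀ = (γ 0 : F) • e₀) (hT : T ∈ unipFactors γ h) :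
    (#{φ ∈ annE₀ F | φ ᵥ* T = φ} : ℤ) = q - 1 := by
  have hγ := (γ 0).ne_zero
  obtain ⟨hunip, hfix, -⟩ := (mem_unipFactors hdet).1 hT
  rw [hcol, mulVec_smul] at hfix
  have hent := first_col_of_mulVec_eq_smul (σ := 1) (h := T)
    (by simpa using smul_right_injective _ hγ hfix)
  simp only [mem_unipClass, det_fin_three, trace_fin_three, minorSum] at hunip
  obtain ⟨htr, hmin, -, hreg⟩ := hunip
  simp only [Units.val_one] at hent
  convert card_coeigenvectors hent.2 (t := 1) (by grind) fun hzero ↦ hreg ?_ using 3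
  · simp
  · ext i j; fin_cases i <;> fin_cases j <;>
      simp [one_fin_three, sq, Matrix.mul_apply, Fin.sum_univ_three, hent, hzero]

lemma card_unipFactors_of_eigenvector (hdet : h.det = γ 0 * γ 1 * γ 2)
    (hcol : h *ᵥ e₀ = (γ 0 : F) • e₀) :
    (q - 1) * (#(unipFactors γ h) : ℤ) = q * (q - 1) *
      if traceGap γ h = 0 then (q - 1) * ∑ τ, coeigenCount τ h
      else q ^ 2 - 1 - ∑ τ, coeigenCount τ h := by
  have hfix : (q - 1) * (#(unipFactors γ h) : ℤ) =
      ∑ φ ∈ annE₀ F, (#{T ∈ unipFactors γ h | φ ᵥ* T = φ} : ℤ) := by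
    simp only [natCast_card_filter]
    rw [sum_comm]
    simp only [← natCast_card_filter]
    rw [sum_congr rfl fun T hT ↦ card_annE₀_filter_fixed hdet hcol hT, sum_const, nsmul_eq_mul,
      mul_comm]
  have hsum : ∑ φ ∈ annE₀ F, ∑ τ : Fˣ, (if φ ᵥ* h = (τ : F) • φ then 1 else 0) =
      ∑ τ, coeigenCount τ h := by
    rw [sum_comm]
    simp only [coeigenCount_eq_sum]
  rw [hfix, sum_congr rfl fun φ hφ ↦ card_unipFactors_fixing hdet hcol hφ, ← mul_sum]
  split_ifs
  · rw [← mul_sum, hsum]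
  · rw [sum_sub_distrib, hsum, sum_const, nsmul_one, card_annE₀]

lemma coeigenCount_eq_ite (hγ : γ.Injective) (hdet : h.det = γ 0 * γ 1 * γ 2)
    (hcol : h *ᵥ e₀ = (γ 0 : F) • e₀) (hgap : traceGap γ h = 0) (τ : Fˣ) :
    coeigenCount τ h = if τ = γ 1 ∨ τ = γ 2 then q - 1 else 0 := by
  have hγ₀ := (γ 0).ne_zero
  have hγ₁₂ : (γ 1 : F) ≠ γ 2 := fun h ↦ hγ.ne (show (1 : Fin 3) ≠ 2 by decide) (Units.ext h)
  have hent := first_col_of_mulVec_eq_smul hcol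
  rw [traceGap, trace_fin_three] at hgap
  rw [det_fin_three] at hdet
  rw [coeigenCount_eq_sum, ← natCast_card_filter]
  simp only [Units.ext_iff]
  split_ifs with hτ
  · exact card_coeigenvectors hent.2 (by grind) (by grind)
  · rw [Nat.cast_eq_zero, card_eq_zero, filter_eq_empty_iff]
    intro φ hφ ht
    have hroot := exists_coeigenvector_det_eq hent.2 hφ ht
    grind

lemma coeigenCount_eq_zero (hdet : h.det = γ 0 * γ 1 * γ 2)
    (hcol : h *ᵥ e₀ = (γ 0 : F) • e₀) (hgap : traceGap γ h ≠ 0) :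
    coeigenCount (γ 2) h = 0 := by
  have hent := first_col_of_mulVec_eq_smul hcol
  have hγ₀ := (γ 0).ne_zero
  have hγ₂ := (γ 2).ne_zero
  rw [coeigenCount_eq_sum, ← natCast_card_filter, Nat.cast_eq_zero, card_eq_zero,
    filter_eq_empty_iff]
  intro φ hφ ht
  have hroot := exists_coeigenvector_det_eq hent.2 hφ ht
  rw [traceGap, trace_fin_three] at hgap
  rw [det_fin_three] at hdet
  grind

lemma card_unipFactors_of_eigenvector_first (hγ : γ.Injective) (hdet : h.det = γ 0 * γ 1 * γ 2)
    (hcol : h *ᵥ e₀ = (γ 0 : F) • e₀) :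
    (q - 1) * (#(unipFactors γ h) : ℤ) = q * (q - 1) *
      (q ^ 2 - 1 - ∑ τ, coeigenCount τ h + (q - 1) * coeigenCount (γ 2) h) := by
  rw [card_unipFactors_of_eigenvector hdet hcol]
  split_ifs with hgap
  · have h₁₂ : γ 1 ≠ γ 2 := hγ.ne (by decide)
    have hsum : ∑ τ, coeigenCount τ h = 2 * (q - 1) := by
      simp only [coeigenCount_eq_ite hγ hdet hcol hgap]
      rw [← sum_filter, sum_const, filter_or, card_union_of_disjoint, filter_eq', filter_eq']
      · simp
      · simp [filter_eq', h₁₂]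
    rw [hsum, coeigenCount_eq_ite hγ hdet hcol hgap, if_pos (Or.inr rfl)]
    ring
  · rw [coeigenCount_eq_zero hdet hcol hgap]
    ring

lemma unipFactors_eq_empty {σ : Fˣ} (hσ : σ ≠ γ 0) (hdet : h.det = γ 0 * γ 1 * γ 2)
    (hcol : h *ᵥ e₀ = (σ : F) • e₀) : unipFactors γ h = ∅ := by
  have hσ₀ := σ.ne_zero
  rw [← coe_inj, coe_empty, Set.eq_empty_iff_forall_notMem]
  intro T hT
  obtain ⟨hunip, hfix, -⟩ := (mem_unipFactors hdet).1 hT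
  rw [hcol, mulVec_eq_iff] at hfix
  simp only [mem_unipClass, det_fin_three, trace_fin_three, minorSum] at hunip
  simp only [Matrix.cons_val, Pi.smul_apply, smul_eq_mul, mul_one, mul_zero, add_zero] at hfix
  refine hσ (Units.ext ?_)
  have hcube : ((γ 0 : F) - σ) ^ 3 = 0 := by grind
  exact (sub_eq_zero.1 (pow_eq_zero_iff three_ne_zero |>.1 hcube)).symm

lemma card_unipFactors (hγ : γ.Injective) (hdet : h.det = γ 0 * γ 1 * γ 2) :
    (q - 1) * (#(unipFactors γ h) : ℤ) =
      q * ((1 - ∑ σ, colInd σ h) * (q ^ 2 - 1 - 2 * ∑ τ, coeigenCount τ h +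
          (q - 1) * (coeigenCount (γ 1) h + coeigenCount (γ 2) h)) +
        (q - 1) * (colInd (γ 0) h * (q ^ 2 - 1 - ∑ τ, coeigenCount τ h +
          (q - 1) * coeigenCount (γ 2) h))) := by
  by_cases hcol : ∃ ρ : Fˣ, h *ᵥ e₀ = (ρ : F) • e₀
  · obtain ⟨ρ, hcol⟩ := hcol
    simp only [colInd_eq_ite hcol, sum_ite_eq', mem_univ, if_true, sub_self, zero_mul, zero_add]
    rcases eq_or_ne ρ (γ 0) with rfl | hρ
    · rw [card_unipFactors_of_eigenvector_first hγ hdet hcol, if_pos rfl, one_mul, mul_assoc]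
    · rw [unipFactors_eq_empty hρ hdet hcol, if_neg hρ.symm]
      simp
  · push Not at hcol
    have hzero (σ : Fˣ) : colInd σ h = 0 := if_neg (hcol σ)
    simp only [hzero, sum_const_zero, sub_zero, one_mul, zero_mul, mul_zero, add_zero]
    exact card_unipFactors_of_not_eigenvector hγ hdet hcol

end EigenvectorCase

section Summation

variable [Fintype F]

variable {α β γ : Fin 3 → Fˣ}

lemma coinc₂_comm (α β : Fin 3 → Fˣ) (σ τ : Fˣ) : coinc₂ α β σ τ = coinc₂ α β τ σ := by
  have hmult (r : Fin 3 → Fˣ) (s t : Fˣ) : mult₂ r s t = mult₂ r t s := by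
    rw [mult₂, mult₂, Nat.cast_inj]
    refine card_equiv (Equiv.prodComm _ _) fun p ↦ ?_
    simp only [mem_filter_univ, Equiv.prodComm_apply, Prod.fst_swap, Prod.snd_swap]
    grind
  rw [coinc₂, coinc₂, sum_comm]
  simp only [hmult]

lemma pairSum_col_row_comm (hα : α.Injective) (hβ : β.Injective) (σ τ : Fˣ) :
    pairSum α β (fun h ↦ colInd σ h * rowInd τ h) =
      pairSum α β fun h ↦ colInd τ h * rowInd σ h := by
  rw [pairSum_col_row hα hβ, pairSum_col_row hα hβ, coinc₂_comm, mul_right_comm _ σ τ]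
  ring

lemma sum_pairSum_row (hα : α.Injective) (hβ : β.Injective) :
    ∑ τ, pairSum α β (rowInd τ) = 9 * q ^ 6 * (q + 1) ^ 2 +
      (q - 1) * (q ^ 5 * (q ^ 2 - 1) * (q + 2) ^ 2) := by
  simp only [pairSum_row hα hβ, sum_add_distrib, ← mul_sum, sum_coinc, sum_const, card_univ,
    nsmul_eq_mul, card_units_int]
  ring

lemma sum_pairSum_col_row (hα : α.Injective) (hβ : β.Injective) (σ : Fˣ) :
    ∑ τ, pairSum α β (fun h ↦ colInd σ h * rowInd τ h) =
      (4 * q ^ 6 + q ^ 5 * (q - 1) ^ 2) * coinc α β σ + 18 * q ^ 5 * (q - 1) +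
        2 * q ^ 4 * (q - 1) ^ 3 + q ^ 3 * (q - 1) ^ 3 * ((q - 1) ^ 2 + 6 * q) := by
  have hthird : ∑ τ, coinc α β ((∏ i, β i) / ((∏ i, α i) * σ * τ)) = 9 := by
    simp only [← div_div _ _ (_ : Fˣ)]
    rw [← sum_coinc α β]
    exact Equiv.sum_comp (Equiv.divLeft _) (coinc α β)
  simp only [pairSum_col_row hα hβ, sum_add_distrib, ← mul_sum, mul_add, sum_coinc₂, sum_coinc,
    hthird, sum_const, card_univ, nsmul_eq_mul, card_units_int]
  ring

/-- The indicator that `e₀` is not an eigenvector. -/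
def nonEigInd (h : M₃) : ℤ := 1 - ∑ σ, colInd σ h

lemma pairSum_add (f g : M₃ → ℤ) :
    pairSum α β (fun h ↦ f h + g h) = pairSum α β f + pairSum α β g := by
  simp only [pairSum, sum_add_distrib]

lemma pairSum_sub (f g : M₃ → ℤ) :
    pairSum α β (fun h ↦ f h - g h) = pairSum α β f - pairSum α β g := by
  simp only [pairSum, sum_sub_distrib]

lemma pairSum_const_mul (c : ℤ) (f : M₃ → ℤ) :
    pairSum α β (fun h ↦ c * f h) = c * pairSum α β f := by
  simp only [pairSum, mul_sum]

lemma pairSum_sum {ι : Type*} (s : Finset ι) (f : ι → M₃ → ℤ) :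
    pairSum α β (fun h ↦ ∑ i ∈ s, f i h) = ∑ i ∈ s, pairSum α β (f i) := by
  simp only [pairSum]
  exact (sum_congr rfl fun _ _ ↦ sum_comm).trans sum_comm

lemma pairSum_mul_coeigenCount {f : M₃ → ℤ}
    (hf : ∀ x : M₃ˣ, x.val *ᵥ e₀ = e₀ → ∀ h, f (conjPerm x h) = f h) (τ : Fˣ) :
    pairSum α β (fun h ↦ f h * coeigenCount τ h) =
      (q ^ 2 - 1) * pairSum α β fun h ↦ f h * rowInd τ h := by
  simp only [coeigenCount_eq_sum, mul_sum, pairSum_sum]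
  rw [← card_annE₀, ← nsmul_eq_mul, ← sum_const]
  refine sum_congr rfl fun φ hφ ↦ ?_
  obtain ⟨x, hx₀, hx₂⟩ := exists_units_vecMul_eq hφ
  rw [← pairSum_conj α β x fun h ↦ f h * rowInd τ h]
  simp only [hf x hx₀, rowInd_conjPerm hx₂]

lemma nonEigInd_conjPerm {x : M₃ˣ} (hx : x.val *ᵥ e₀ = e₀) (h : M₃) :
    nonEigInd (conjPerm x h) = nonEigInd h := by
  simp only [nonEigInd, colInd_conjPerm hx]

lemma pairSum_one (hα : α.Injective) (hβ : β.Injective) :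
    pairSum α β (fun _ ↦ 1) = q ^ 6 * (q + 1) ^ 2 * (q ^ 2 + q + 1) ^ 2 := by
  simp only [pairSum, sum_const, nsmul_eq_mul, card_ssClass hα, card_ssClass hβ]
  ring

lemma pairSum_nonEigInd (hα : α.Injective) (hβ : β.Injective) :
    pairSum α β nonEigInd = q ^ 6 * (q + 1) ^ 2 * (q ^ 2 + q + 1) ^ 2 - 9 * q ^ 6 * (q + 1) ^ 2 -
      (q - 1) * (q ^ 5 * (q ^ 2 - 1) * (q + 2) ^ 2) := by
  rw [show (nonEigInd : M₃ → ℤ) = fun h ↦ 1 - ∑ σ, colInd σ h from rfl,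
    pairSum_sub, pairSum_sum, pairSum_one hα hβ]
  simp only [pairSum_col hα hβ, ← pairSum_row hα hβ, sum_pairSum_row hα hβ]
  ring

lemma pairSum_nonEigInd_row (hα : α.Injective) (hβ : β.Injective) (τ : Fˣ) :
    pairSum α β (fun h ↦ nonEigInd h * rowInd τ h) = pairSum α β (rowInd τ) -
      ∑ σ, pairSum α β fun h ↦ colInd τ h * rowInd σ h := by
  simp only [nonEigInd, sub_mul, one_mul, sum_mul, pairSum_sub, pairSum_sum,
    pairSum_col_row_comm hα hβ _ τ]

lemma det_inv_mul_of_mem_ssClass {A B : M₃}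
    (hprod : ∏ i, γ i = (∏ i, β i) / ∏ i, α i) (hA : A ∈ ssClass α) (hB : B ∈ ssClass β) :
    (A⁻¹ * B).det = γ 0 * γ 1 * γ 2 := by
  have hunit := (isUnit_iff_isUnit_det A).1 (isUnit_of_mem_ssClass hA)
  have hγ : (γ 0 * γ 1 * γ 2 : F) * (α 0 * α 1 * α 2) = β 0 * β 1 * β 2 := by
    rw [eq_div_iff_mul_eq'] at hprod
    simpa [Fin.prod_univ_three] using congrArg Units.val hprod
  refine hunit.mul_left_cancel ?_
  rw [← det_mul, mul_nonsing_inv_cancel_left _ _ hunit, (mem_ssClass.1 hA).2.2,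
    (mem_ssClass.1 hB).2.2, ← hγ]
  ring

lemma pairSum_card_unipFactors_eq (hγ : γ.Injective) (hprod : ∏ i, γ i = (∏ i, β i) / ∏ i, α i) :
    (q - 1) * pairSum α β (fun h ↦ #(unipFactors γ h)) = q * (q ^ 2 - 1) * (
      pairSum α β nonEigInd -
        2 * ∑ τ, pairSum α β (fun h ↦ nonEigInd h * rowInd τ h) +
        (q - 1) * (pairSum α β (fun h ↦ nonEigInd h * rowInd (γ 1) h) +
          pairSum α β (fun h ↦ nonEigInd h * rowInd (γ 2) h)) +
      (q - 1) * (pairSum α β (colInd (γ 0)) -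
        ∑ τ, pairSum α β (fun h ↦ colInd (γ 0) h * rowInd τ h) +
        (q - 1) * pairSum α β (fun h ↦ colInd (γ 0) h * rowInd (γ 2) h))) := by
  have hpoint : pairSum α β (fun h ↦ (q - 1) * #(unipFactors γ h)) = pairSum α β fun h ↦
      q * ((q ^ 2 - 1) * nonEigInd h - 2 * ∑ τ, nonEigInd h * coeigenCount τ h +
          (q - 1) * (nonEigInd h * coeigenCount (γ 1) h + nonEigInd h * coeigenCount (γ 2) h) +
        (q - 1) * ((q ^ 2 - 1) * colInd (γ 0) h - ∑ τ, colInd (γ 0) h * coeigenCount τ h +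
          (q - 1) * (colInd (γ 0) h * coeigenCount (γ 2) h))) := by
    refine sum_congr rfl fun A hA ↦ sum_congr rfl fun B hB ↦ ?_
    simp only [card_unipFactors hγ (det_inv_mul_of_mem_ssClass hprod hA hB), ← mul_sum, nonEigInd]
    ring
  have hcol (x : M₃ˣ) (hx : x.val *ᵥ e₀ = e₀)
      (h : M₃) := colInd_conjPerm (h := h) hx (γ 0)
  rw [← pairSum_const_mul, hpoint]
  simp only [pairSum_const_mul, pairSum_add, pairSum_sub, pairSum_sum,
    pairSum_mul_coeigenCount fun _ hx ↦ nonEigInd_conjPerm hx, pairSum_mul_coeigenCount hcol]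
  simp only [← mul_sum]
  ring

lemma pairSum_card_unipFactors (hα : α.Injective) (hβ : β.Injective) (hγ : γ.Injective)
    (hprod : ∏ i, γ i = (∏ i, β i) / ∏ i, α i) (hgen : ∀ i j k, β j ≠ γ k * α i) :
    pairSum α β (fun h ↦ #(unipFactors γ h)) = q ^ 7 * (q - 1) * (q ^ 2 - 1) *
      (q ^ 4 + 6 * q ^ 3 + 19 * q ^ 2 + 42 * q + 46) := by
  have hcoinc (k : Fin 3) : coinc α β (γ k) = 0 := coinc_eq_zero fun i j ↦ hgen i j k
  have hthird : (∏ i, β i) / ((∏ i, α i) * γ 0 * γ 2) = γ 1 := by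
    have hprod' := eq_div_iff_mul_eq'.1 hprod
    rw [div_eq_iff_eq_mul, ← hprod', Fin.prod_univ_three γ]
    ac_rfl
  refine mul_left_cancel₀ (card_sub_one_ne_zero (F := F)) ?_
  rw [pairSum_card_unipFactors_eq hγ hprod]
  simp only [pairSum_nonEigInd_row hα hβ, sum_sub_distrib, sum_pairSum_col_row hα hβ,
    sum_pairSum_row hα hβ, pairSum_nonEigInd hα hβ, sum_add_distrib, ← mul_sum, sum_coinc]
  simp only [pairSum_col_row hα hβ, pairSum_row hα hβ, pairSum_col hα hβ, hcoinc, hthird,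
    coinc₂_eq_zero_left fun i j ↦ hgen i j 0, sum_const, card_univ, nsmul_eq_mul, card_units_int]
  ring

end Summation

section Assembly

variable [Fintype F]

/-- The triples `(A, B, T)` of elements of the classes `α`, `β` and of the regular unipotent class
with `T (A⁻¹ B)` in the class `γ`. -/
def triples (α β γ : Fin 3 → Fˣ) : Finset (M₃ × M₃ × M₃) :=
  {p ∈ ssClass α ×ˢ ssClass β ×ˢ unipClass F | p.2.2 * (p.1⁻¹ * p.2.1) ∈ ssClass γ}

/-- The number of triples for which `v` is an eigenvector of `T (A⁻¹ B)` of eigenvalue `γ 0`. -/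
def eigenTriples (α β γ : Fin 3 → Fˣ) (v : Fin 3 → F) : ℤ :=
  #{p ∈ triples α β γ | (p.2.2 * (p.1⁻¹ * p.2.1)) *ᵥ v = (γ 0 : F) • v}

variable {α β γ : Fin 3 → Fˣ}

lemma mem_triples {A B T : M₃} : (A, B, T) ∈ triples α β γ ↔
    A ∈ ssClass α ∧ B ∈ ssClass β ∧ T ∈ unipClass F ∧ T * (A⁻¹ * B) ∈ ssClass γ := by
  simp only [triples, mem_filter, mem_product, and_assoc]

lemma card_eigenvectors (hγ : γ.Injective) {S : M₃} (hS : S ∈ ssClass γ) :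
    (#{v : Fin 3 → F | v ≠ 0 ∧ S *ᵥ v = (γ 0 : F) • v} : ℤ) = q - 1 := by
  rw [← isConj_diagonal_iff_mem_ssClass hγ] at hS
  obtain ⟨x, rfl⟩ := exists_eq_units_conj_of_isConj hS
  have hx := mulVec_injective_of_isUnit x.isUnit
  have hxe : x.val *ᵥ e₀ ≠ 0 := fun h ↦
    e₀_ne_zero (hx (h.trans (mulVec_zero _).symm))
  rw [← card_units_smul hxe, Nat.cast_inj]
  congr 1
  ext v
  obtain ⟨w, rfl⟩ := (mulVec_surjective_iff_isUnit.2 x.isUnit) v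
  have hw : x.val *ᵥ w ≠ 0 ↔ w ≠ 0 := by
    rw [← hx.ne_iff (x := w), mulVec_zero]
  have hsmul : (∃ s : Fˣ, (s : F) • x.val *ᵥ e₀ = x.val *ᵥ w) ↔ ∃ s : Fˣ, (s : F) • e₀ = w :=
    exists_congr fun s ↦ by rw [← mulVec_smul, hx.eq_iff]
  simp only [mem_filter, mem_univ, true_and]
  rw [hw, hsmul, ← diagonal_mulVec_eq_smul_iff hγ, ← conjPerm_apply, ← mulVec_smul,
    conjPerm_mulVec_eq_iff]

lemma eigenTriples_mulVec (α β γ : Fin 3 → Fˣ) (x : M₃ˣ) (v : Fin 3 → F) :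
    eigenTriples α β γ (x.val *ᵥ v) = eigenTriples α β γ v := by
  rw [eigenTriples, eigenTriples, Nat.cast_inj]
  refine (card_equiv ((conjPerm x).prodCongr ((conjPerm x).prodCongr (conjPerm x))) fun p ↦ ?_).symm
  simp only [triples, mem_filter, mem_product, Equiv.prodCongr_apply, Prod.map_fst, Prod.map_snd,
    conjPerm_mem_ssClass, conjPerm_mem_unipClass, ← conjPerm_inv, ← conjPerm_mul, ← mulVec_smul,
    conjPerm_mulVec_eq_iff]

lemma eigenTriples_e₀ (α β γ : Fin 3 → Fˣ) :
    eigenTriples α β γ e₀ = pairSum α β fun h ↦ #(unipFactors γ h) := by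
  simp only [eigenTriples, triples, filter_filter, natCast_card_filter, sum_product, pairSum,
    unipFactors]

lemma mul_card_triples (hγ : γ.Injective) : (q - 1) * #(triples α β γ) =
    (q ^ 3 - 1) * pairSum α β fun h ↦ #(unipFactors γ h) := by
  have hv : ∀ v ∈ univ.erase 0, eigenTriples α β γ v = eigenTriples α β γ e₀ := fun v hv ↦ by
    obtain ⟨x, rfl⟩ := exists_units_mulVec_eq_of_ne_zero e₀_ne_zero (ne_of_mem_erase hv)
    exact eigenTriples_mulVec α β γ x e₀
  have hcard : (#((univ : Finset (Fin 3 → F)).erase 0) : ℤ) = q ^ 3 - 1 := by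
    rw [cast_card_erase_of_mem (mem_univ _), card_univ, Fintype.card_fun, Fintype.card_fin,
      Nat.cast_pow]
  calc (q - 1) * (#(triples α β γ) : ℤ)
    _ = ∑ p ∈ triples α β γ,
        (#{v : Fin 3 → F | v ≠ 0 ∧ (p.2.2 * (p.1⁻¹ * p.2.1)) *ᵥ v = (γ 0 : F) • v} : ℤ) := by
      rw [mul_comm, ← nsmul_eq_mul, ← sum_const]
      exact sum_congr rfl fun p hp ↦ (card_eigenvectors hγ (mem_filter.1 hp).2).symm
    _ = ∑ v ∈ univ.erase 0, eigenTriples α β γ v := by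
      simp only [eigenTriples, ← filter_filter, filter_ne', natCast_card_filter]
      exact sum_comm
    _ = (q ^ 3 - 1) * pairSum α β fun h ↦ #(unipFactors γ h) := by
      rw [sum_congr rfl hv, sum_const, nsmul_eq_mul, hcard, eigenTriples_e₀]

lemma card_triples (hα : α.Injective) (hβ : β.Injective) (hγ : γ.Injective)
    (hprod : ∏ i, γ i = (∏ i, β i) / ∏ i, α i) (hgen : ∀ i j k, β j ≠ γ k * α i) :
    (#(triples α β γ) : ℤ) = q ^ 7 * (q ^ 2 - 1) * (q ^ 3 - 1) *
      (q ^ 4 + 6 * q ^ 3 + 19 * q ^ 2 + 42 * q + 46) := by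
  refine mul_left_cancel₀ (card_sub_one_ne_zero (F := F)) ?_
  rw [mul_card_triples hγ, pairSum_card_unipFactors hα hβ hγ hprod hgen]
  ring

lemma card_quadruples {a b c : Fin 3 → Fˣ} (ha : a.Injective) (hb : b.Injective)
    (hc : c.Injective) :
    Nat.card {x : M₃ × M₃ × M₃ × M₃ // IsConj (diagonal fun i ↦ (a i : F)) x.1 ∧
      IsConj (diagonal fun i ↦ (b i : F)) x.2.1 ∧ IsConj (diagonal fun i ↦ (c i : F)) x.2.2.1 ∧
      IsConj (jordan3 F) x.2.2.2 ∧ x.1 * x.2.1 * x.2.2.1 * x.2.2.2 = 1} =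
    #(triples b⁻¹ c a⁻¹) := by
  simp only [isConj_diagonal_iff_mem_ssClass ha, isConj_diagonal_iff_mem_ssClass hb,
    isConj_diagonal_iff_mem_ssClass hc, isConj_jordan3_iff_mem_unipClass]
  rw [Nat.card_eq_fintype_card, Fintype.card_subtype]
  refine card_nbij' (fun x ↦ (x.2.1⁻¹, x.2.2.1, x.2.2.2))
    (fun p ↦ ((p.1⁻¹ * p.2.1 * p.2.2)⁻¹, p.1⁻¹, p.2.1, p.2.2)) ?_ ?_ ?_ ?_
  all_goals simp only [Set.MapsTo, Set.LeftInvOn, Set.RightInvOn, mem_coe, mem_filter_univ,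
    mem_triples, Prod.forall, Prod.mk.injEq, and_true]
  · rintro S A B T ⟨hS, hA, hB, hT, hone⟩
    have hSinv : S⁻¹ = A * B * T := inv_eq_right_inv (by rw [← hone]; simp only [mul_assoc])
    refine ⟨inv_mem_ssClass hb hA, hB, hT, ?_⟩
    rw [inv_inv_of_mem_ssClass hA, mul_mem_ssClass_comm, ← hSinv]
    exact inv_mem_ssClass ha hS
  · rintro A B T ⟨hA, hB, hT, hABT⟩
    rw [mul_mem_ssClass_comm] at hABT
    refine ⟨?_, ?_, hB, hT, ?_⟩
    · simpa only [inv_inv] using inv_mem_ssClass (r := a⁻¹) (inv_injective.comp ha) hABT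
    · simpa only [inv_inv] using inv_mem_ssClass (r := b⁻¹) (inv_injective.comp hb) hA
    · simp only [mul_assoc]
      rw [← mul_assoc A⁻¹]
      exact nonsing_inv_mul _ ((isUnit_iff_isUnit_det _).1 (isUnit_of_mem_ssClass hABT))
  · rintro S A B T ⟨-, hA, -, -, hone⟩
    refine ⟨?_, inv_inv_of_mem_ssClass hA⟩
    rw [inv_inv_of_mem_ssClass hA]
    exact inv_eq_left_inv (by rw [← hone]; simp only [mul_assoc])
  · rintro A B T ⟨hA, -⟩
    exact inv_inv_of_mem_ssClass hA

lemma card_GL_div_card_sub_one :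
    (Nat.card M₃ˣ : ℤ) / (q - 1) = q ^ 3 * (q ^ 2 - 1) * (q ^ 3 - 1) := by
  have hcard : Nat.card M₃ˣ = ∏ i : Fin 3, (Fintype.card F ^ 3 - Fintype.card F ^ (i : ℕ)) :=
    card_GL_field 3
  have hsub (i : Fin 3) : ((Fintype.card F ^ 3 - Fintype.card F ^ (i : ℕ) : ℕ) : ℤ) =
      q ^ 3 - q ^ (i : ℕ) := by
    rw [Nat.cast_sub (Nat.pow_le_pow_right Fintype.card_pos i.is_le'), Nat.cast_pow, Nat.cast_pow]
  rw [hcard, Nat.cast_prod]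
  simp only [hsub, Fin.prod_univ_three, Fin.val_zero, Fin.val_one, Fin.val_two]
  exact Int.ediv_eq_of_eq_mul_left card_sub_one_ne_zero (by ring)

lemma card_quadruples_of_units {a b c : Fin 3 → Fˣ} (ha : a.Injective) (hb : b.Injective)
    (hc : c.Injective) (hprod : (∏ i, a i) * (∏ i, b i) * (∏ i, c i) = 1)
    (hgen : ∀ i j l, a i * b j * c l ≠ 1) :
    (Nat.card {x : M₃ × M₃ × M₃ × M₃ // IsConj (diagonal fun i ↦ (a i : F)) x.1 ∧
      IsConj (diagonal fun i ↦ (b i : F)) x.2.1 ∧ IsConj (diagonal fun i ↦ (c i : F)) x.2.2.1 ∧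
      IsConj (jordan3 F) x.2.2.2 ∧ x.1 * x.2.1 * x.2.2.1 * x.2.2.2 = 1} : ℤ) =
    Nat.card M₃ˣ / (q - 1) * (q ^ 4 * (q ^ 4 + 6 * q ^ 3 + 19 * q ^ 2 + 42 * q + 46)) := by
  have hprod' : ∏ i, a⁻¹ i = (∏ i, c i) / ∏ i, b⁻¹ i := by
    simp only [Pi.inv_apply, prod_inv_distrib, div_inv_eq_mul, inv_eq_iff_mul_eq_one]
    rw [← hprod, mul_comm (∏ i, c i), mul_assoc]
  have hgen' (i j l) : c j ≠ a⁻¹ l * b⁻¹ i := fun h ↦ hgen l i j (by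
    rw [h, Pi.inv_apply, Pi.inv_apply, ← mul_inv, mul_inv_cancel])
  rw [card_quadruples ha hb hc, card_GL_div_card_sub_one, card_triples (α := b⁻¹) (γ := a⁻¹)
    (inv_injective.comp hb) hc (inv_injective.comp ha) hprod' hgen']
  ring

end Assembly

end FiniteField

end GL3Count

theorem GL3_quadruple_count_three_ss_one_unipotent_general {F : Type*} [Field F] [Fintype F]
    (a b c : Fin 3 → F) (ha : a.Injective) (hb : b.Injective) (hc : c.Injective)
    (hprod : (∏ i, a i) * (∏ i, b i) * (∏ i, c i) = 1) (hgen : ∀ i j l, a i * b j * c l ≠ 1) :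
    (Nat.card {x : Matrix (Fin 3) (Fin 3) F × Matrix (Fin 3) (Fin 3) F ×
        Matrix (Fin 3) (Fin 3) F × Matrix (Fin 3) (Fin 3) F //
        IsConj (diagonal a) x.1 ∧ IsConj (diagonal b) x.2.1 ∧ IsConj (diagonal c) x.2.2.1 ∧
        IsConj !![1, 1, 0; 0, 1, 1; 0, 0, 1] x.2.2.2 ∧ x.1 * x.2.1 * x.2.2.1 * x.2.2.2 = 1} : ℤ) =
      (Nat.card (Matrix (Fin 3) (Fin 3) F)ˣ : ℤ) / (Fintype.card F - 1) *
        (Fintype.card F ^ 4 * (Fintype.card F ^ 4 + 6 * Fintype.card F ^ 3 +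
          19 * Fintype.card F ^ 2 + 42 * Fintype.card F + 46)) := by
  have hne : (∏ i, a i ≠ 0 ∧ ∏ i, b i ≠ 0) ∧ ∏ i, c i ≠ 0 := by
    simpa only [mul_ne_zero_iff] using hprod.trans_ne one_ne_zero
  simp only [prod_ne_zero_iff, mem_univ, true_imp_iff] at hne
  obtain ⟨⟨ha₀, hb₀⟩, hc₀⟩ := hne
  lift a to Fin 3 → Fˣ using fun i ↦ (ha₀ i).isUnit
  lift b to Fin 3 → Fˣ using fun i ↦ (hb₀ i).isUnit
  lift c to Fin 3 → Fˣ using fun i ↦ (hc₀ i).isUnit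
  exact GL3Count.card_quadruples_of_units ha.of_comp hb.of_comp hc.of_comp
    (Units.ext (by push_cast; exact hprod))
    fun i j l h ↦ hgen i j l (by simpa using congrArg Units.val h)

/-- Genus 0, four punctures, `GL₃`, three generic regular semisimple classes and one regular
unipotent class: the number of quadruples `(S₁,S₂,S₃,S₄) ∈ C₁ × C₂ × C₃ × C₄` with
`S₁S₂S₃S₄ = 1` is `(|GL₃(F)|/(q−1))·q⁴(q⁴+6q³+19q²+42q+46)`. -/
theorem GL3_quadruple_count_three_ss_one_unipotent
{F : Type*} [Field F] [Fintype F] (hchar2 : ringChar F ≠ 2) (hchar3 : ringChar F ≠ 3)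
    (q : ℕ) (hq : q = Fintype.card F)
    (a₁ a₂ a₃ b₁ b₂ b₃ c₁ c₂ c₃ : F)
    (ha0 : a₁ ≠ 0) (ha0' : a₂ ≠ 0) (ha0'' : a₃ ≠ 0)
    (hb0 : b₁ ≠ 0) (hb0' : b₂ ≠ 0) (hb0'' : b₃ ≠ 0)
    (hc0 : c₁ ≠ 0) (hc0' : c₂ ≠ 0) (hc0'' : c₃ ≠ 0)
    (ha : Function.Injective ![a₁, a₂, a₃]) (hb : Function.Injective ![b₁, b₂, b₃])
    (hc : Function.Injective ![c₁, c₂, c₃])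
    (hprod : (a₁ * a₂ * a₃) * (b₁ * b₂ * b₃) * (c₁ * c₂ * c₃) = 1)
    (hgen : ∀ i j l : Fin 3, ![a₁, a₂, a₃] i * ![b₁, b₂, b₃] j * ![c₁, c₂, c₃] l ≠ 1) :
    (Nat.card {x : Matrix (Fin 3) (Fin 3) F × Matrix (Fin 3) (Fin 3) F ×
        Matrix (Fin 3) (Fin 3) F × Matrix (Fin 3) (Fin 3) F //
        IsConj (Matrix.diagonal ![a₁, a₂, a₃]) x.1 ∧
        IsConj (Matrix.diagonal ![b₁, b₂, b₃]) x.2.1 ∧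
        IsConj (Matrix.diagonal ![c₁, c₂, c₃]) x.2.2.1 ∧
        IsConj (!![1, 1, 0; 0, 1, 1; 0, 0, 1] : Matrix (Fin 3) (Fin 3) F) x.2.2.2 ∧
        x.1 * x.2.1 * x.2.2.1 * x.2.2.2 = 1} : ℤ) =
      ((Nat.card (Matrix (Fin 3) (Fin 3) F)ˣ : ℤ) / ((q : ℤ) - 1)) *
        ((q : ℤ) ^ 4 * ((q : ℤ) ^ 4 + 6 * (q : ℤ) ^ 3 + 19 * (q : ℤ) ^ 2 +
          42 * (q : ℤ) + 46)) := by
  subst hq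
  exact GL3_quadruple_count_three_ss_one_unipotent_general _ _ _ ha hb hc
    (by simpa [Fin.prod_univ_three] using hprod) hgen
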